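/- arXiv:1909.00313 — 3 statements merged into one kernel-verified Lean document; each statement's English description precedes it below -/
import Mathlib

section
/- For every strict partition λ all of whose parts are at most n, the weight wt(λ) = Λ₁ − Σ_{(i,j)∈λ} α_{res(i,j)} belongs to the orbit W·Λ₁ of Λ₁ under the Weyl group W of type B_n. -/
/-- The fundamental weight Λ₁ = (1/2, …, 1/2) of type Bₙ in ℚⁿ. -/
def LambdaOne (n : ℕ) : Fin n → ℚ := fun _ => 1 / 2

/-- The k-th simple root of type Bₙ (1-based index r): α₁ = e₁ and
αᵣ = eᵣ - e_{r-1} for r ≥ 2; expressed with 0-based coordinates. -/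
def simpleRootB (n : ℕ) (r : ℕ) : Fin n → ℚ := fun i =>
  (if (i : ℕ) + 1 = r then 1 else 0) - (if (i : ℕ) + 2 = r then 1 else 0)

/-- Negation of the coordinate `c`. -/
def negCoord {n : ℕ} (c : Fin n) : Equiv.Perm (Fin n → ℚ) :=
  Equiv.piCongrRight fun i => if i = c then Equiv.neg ℚ else Equiv.refl ℚ

/-- The simple reflection `s_k` of type Bₙ: `s₁` negates the first coordinate and,
for `k ≥ 2`, `s_k` exchanges the coordinates `k-1` and `k`. -/
def simpleReflB {n : ℕ} (c : Fin n) : Equiv.Perm (Fin n → ℚ) :=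
  if (c : ℕ) = 0 then negCoord c
  else (Equiv.swap c ⟨(c : ℕ) - 1, Nat.lt_of_le_of_lt (Nat.sub_le _ _) c.isLt⟩).arrowCongr (Equiv.refl ℚ)

/-- The Weyl group of type Bₙ, generated by the simple reflections. -/
def weylB (n : ℕ) : Subgroup (Equiv.Perm (Fin n → ℚ)) :=
  Subgroup.closure (Set.range (simpleReflB (n := n)))

/-- The shifted Young diagram of a strict partition, as a finset of (1-based)
boxes: the (1-based) row `i+1` consists of the boxes `(i+1, j)` for
`i + 1 ≤ j ≤ l[i] + i`. -/
def diagFinset (l : List ℕ) : Finset (ℕ × ℕ) :=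
  (Finset.range l.length).biUnion fun i =>
    (Finset.Icc (i + 1) (l.getD i 0 + i)).image fun j => (i + 1, j)

/-- The residue `res(i,j) = j - i + 1` of a box. -/
def resBox (b : ℕ × ℕ) : ℕ := b.2 + 1 - b.1

/-- wt(λ) = Λ₁ - Σ_{(i,j) ∈ λ} α_{res(i,j)}. -/
noncomputable def wtB (n : ℕ) (l : List ℕ) : Fin n → ℚ :=
  LambdaOne n - ∑ b ∈ diagFinset l, simpleRootB n (resBox b)

theorem negCoord_apply {n : ℕ} (c : Fin n) (v : Fin n → ℚ) (i : Fin n) :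
    negCoord c v i = if i = c then - v i else v i := by
  unfold negCoord
  by_cases h : i = c <;> simp [h]

theorem negCoord_mem {n : ℕ} (m : ℕ) (hm : m < n) : negCoord (⟨m, hm⟩ : Fin n) ∈ weylB n := by
  induction m with
  | zero =>
    have : simpleReflB (⟨0, hm⟩ : Fin n) = negCoord ⟨0, hm⟩ := by simp [simpleReflB]
    rw [← this]
    exact Subgroup.subset_closure ⟨_, rfl⟩
  | succ m ih =>
    have ih := ih (by omega)
    have hs : simpleReflB (⟨m + 1, hm⟩ : Fin n) ∈ weylB n :=
      Subgroup.subset_closure ⟨_, rfl⟩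
    have key : negCoord (⟨m + 1, hm⟩ : Fin n) =
        simpleReflB (⟨m + 1, hm⟩ : Fin n) * negCoord (⟨m, by omega⟩ : Fin n) *
          simpleReflB (⟨m + 1, hm⟩ : Fin n) := by
      ext v i
      simp only [Equiv.Perm.mul_apply, simpleReflB, negCoord_apply]
      simp [Equiv.arrowCongr, negCoord_apply, Equiv.swap_apply_eq_iff]
    rw [key]
    exact Subgroup.mul_mem _ (Subgroup.mul_mem _ hs ih) hs

theorem orbit_flip (n : ℕ) (S : Finset (Fin n)) :
    ∃ w ∈ weylB n, w (LambdaOne n) = fun i => if i ∈ S then (-1 / 2 : ℚ) else 1 / 2 := by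
  induction S using Finset.induction_on with
  | empty => exact ⟨1, Subgroup.one_mem _, by funext i; simp [LambdaOne]⟩
  | insert a S ha ih =>
    obtain ⟨w, hw, h⟩ := ih
    refine ⟨negCoord a * w, Subgroup.mul_mem _ (negCoord_mem a.1 a.2) hw, ?_⟩
    funext i
    rw [Equiv.Perm.mul_apply, h, negCoord_apply]
    by_cases hi : i = a
    · subst hi; simp [ha]; norm_num
    · simp [hi]

theorem row_sum (n m : ℕ) (k : Fin n) :
    ∑ r ∈ Finset.range m, simpleRootB n (r + 1) k = if (k : ℕ) + 1 = m then 1 else 0 := by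
  induction m with
  | zero => simp
  | succ m ih =>
    rw [Finset.sum_range_succ, ih]
    simp only [simpleRootB]
    split_ifs <;> first | omega | norm_num

theorem list_sum (a : ℕ) (l : List ℕ) (h : l.Nodup) :
    ∑ i ∈ Finset.range l.length, (if a = l.getD i 0 then (1 : ℚ) else 0) =
      if a ∈ l then 1 else 0 := by
  induction l with
  | nil => simp
  | cons b l ih =>
    rw [List.nodup_cons] at h
    rw [List.length_cons, Finset.sum_range_succ']
    simp only [List.getD_cons_succ, List.getD_cons_zero, ih h.2, List.mem_cons]
    by_cases hb : a = b
    · subst hb; simp [h.1]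
    · simp [hb]

theorem wtB_apply (n : ℕ) (l : List ℕ) (h : l.Nodup) (k : Fin n) :
    wtB n l k = 1 / 2 - if (k : ℕ) + 1 ∈ l then 1 else 0 := by
  rw [← list_sum _ l h]
  simp only [wtB, LambdaOne, Pi.sub_apply, Finset.sum_apply, diagFinset]
  congr 1
  rw [Finset.sum_biUnion]
  · refine Finset.sum_congr rfl fun i _ => ?_
    rw [Finset.sum_image (by intro x _ y _ hxy; simpa using hxy), ← row_sum]
    symm
    refine Finset.sum_bij (fun r _ => r + i + 1) ?_ ?_ ?_ ?_
    · intro r hr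
      simp only [Finset.mem_range, Finset.mem_Icc] at *
      omega
    · intro x _ y _ hxy
      omega
    · intro j hj
      simp only [Finset.mem_Icc] at hj
      exact ⟨j - i - 1, by simp only [Finset.mem_range]; omega, by omega⟩
    · intro r _
      congr 1
      simp only [resBox]
      omega
  · intro x _ y _ hxy
    rw [Function.onFun, Finset.disjoint_left]
    intro b hb hb'
    simp only [Finset.mem_image] at hb hb'
    obtain ⟨_, _, rfl⟩ := hb
    obtain ⟨_, _, h2⟩ := hb'
    simp only [Prod.mk.injEq] at h2
    omega

theorem wtB_mem_weyl_orbit (n : ℕ) (l : List ℕ)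
    (hdec : l.Chain' (· > ·)) (hpos : ∀ x ∈ l, 0 < x) (hle : ∀ x ∈ l, x ≤ n) :
    wtB n l ∈ {v | ∃ w ∈ weylB n, w (LambdaOne n) = v} := by
  have hnd : l.Nodup := by
    have h : l.Pairwise (· > ·) := List.isChain_iff_pairwise.mp hdec
    exact h.imp (fun h => ne_of_gt h)
  obtain ⟨w, hw, h⟩ := orbit_flip n (Finset.univ.filter fun i : Fin n => (i : ℕ) + 1 ∈ l)
  refine ⟨w, hw, ?_⟩
  rw [h]
  funext k
  rw [wtB_apply n l hnd k]
  by_cases hk : (k : ℕ) + 1 ∈ l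
  · simp [hk]; norm_num
  · simp [hk]
end

section
/- The prescribed operators make Sp(b) a module over the quiver Hecke algebra R(β); the cyclotomic ideal ⟨x_ℓ^{⟨h_{ν_ℓ}, Λ_i⟩} e(ν) : ν ∈ I^β⟩ acts by zero, so Sp(b) is a module over the cyclotomic quiver Hecke algebra R^{Λ_i}(ξ); and Sp(b) is a simple R^{Λ_i}(ξ)-module on which every x_k acts by zero (a homogeneous simple module, concentrated in a single degree of the ℤ-grading). -/
open scoped Classical

namespace QHA

variable (k : Type) [Field k]

/-- Generators of the quiver Hecke algebra `R(β)` on `m` strands with vertex set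
`Fin n`: the idempotents `e(ν)`, the polynomial generators `x_p` and the
intertwiners `τ_j` (acting on strands `j`, `j+1`, 0-based). -/
inductive Gen (n m : ℕ) : Type
  | e (ν : Fin m → Fin n) : Gen n m
  | x (p : Fin m) : Gen n m
  | t (j : ℕ) (h : j + 1 < m) : Gen n m

/-- The free algebra on the generators. -/
abbrev FA (n m : ℕ) := FreeAlgebra k (Gen n m)

variable {n m : ℕ}

noncomputable def Eg (ν : Fin m → Fin n) : FA k n m := FreeAlgebra.ι k (Gen.e ν)
noncomputable def Xg (p : Fin m) : FA k n m := FreeAlgebra.ι k (Gen.x p)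
noncomputable def Tg (j : ℕ) (h : j + 1 < m) : FA k n m := FreeAlgebra.ι k (Gen.t j h)

/-- The transposition of the strands `j`, `j+1` (0-based). -/
def posSwap (j : ℕ) (h : j + 1 < m) : Equiv.Perm (Fin m) :=
  Equiv.swap ⟨j, Nat.lt_of_succ_lt h⟩ ⟨j + 1, h⟩

/-- The place-permutation `s_j ν` of a sequence `ν`. -/
def swapSeq (j : ℕ) (h : j + 1 < m) (ν : Fin m → Fin n) : Fin m → Fin n :=
  ν ∘ posSwap j h

/-- Evaluation of a two-variable polynomial `p(u,v)` at two elements of a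
(possibly noncommutative) `k`-algebra, as `Σ t_{p,q} a^p b^q`. -/
noncomputable def eval2 {A : Type} [Ring A] [Algebra k A]
    (p : MvPolynomial (Fin 2) k) (a b : A) : A :=
  ∑ d ∈ p.support, algebraMap k A (MvPolynomial.coeff d p) * (a ^ d 0 * b ^ d 1)

/-- Evaluation of a three-variable polynomial. -/
noncomputable def eval3 {A : Type} [Ring A] [Algebra k A]
    (p : MvPolynomial (Fin 3) k) (a b c : A) : A :=
  ∑ d ∈ p.support, algebraMap k A (MvPolynomial.coeff d p) * (a ^ d 0 * b ^ d 1 * c ^ d 2)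

/-- For `p = Q(u,v)`, the polynomial `(Q(u,v) - Q(w,v))/(u - w)` in the three
variables `u = X 0`, `v = X 1`, `w = X 2` (exact division by the monic `u - w`). -/
noncomputable def Qbar (p : MvPolynomial (Fin 2) k) : MvPolynomial (Fin 3) k :=
  (MvPolynomial.finSuccEquiv k 2).symm
    (Polynomial.divByMonic
      ((MvPolynomial.finSuccEquiv k 2)
        (MvPolynomial.rename (fun i : Fin 2 => if i = 0 then (0 : Fin 3) else 1) p -
          MvPolynomial.rename (fun i : Fin 2 => if i = 0 then (2 : Fin 3) else 1) p))
      (Polynomial.X - Polynomial.C (MvPolynomial.X 1)))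

/-- Admissibility of the family `Q_{i,j}(u,v)` of polynomials with respect to the
(symmetrizable) Cartan matrix `A` and symmetrizing integers `d`
(so `(α_i, α_j) = d_i A_{i j}`):
`Q_{i,i} = 0`; `Q_{j,i}(u,v) = Q_{i,j}(v,u)`; `Q_{i,j} = 1` whenever `(α_i,α_j) = 0`
(`i ≠ j`); `Q_{i,j}` is supported on `(p,q)` with
`(α_i,α_i) p + (α_j,α_j) q = -2(α_i,α_j)`; and `t_{i,j;-a_{ij},0} ≠ 0`. -/
def QAdmissible (A : Fin n → Fin n → ℤ) (d : Fin n → ℤ)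
    (Q : Fin n → Fin n → MvPolynomial (Fin 2) k) : Prop :=
  (∀ i, Q i i = 0) ∧
  (∀ i j, Q j i = MvPolynomial.rename (Equiv.swap (0 : Fin 2) 1) (Q i j)) ∧
  (∀ i j, i ≠ j → d i * A i j = 0 → Q i j = 1) ∧
  (∀ i j, i ≠ j → ∀ dd ∈ (Q i j).support,
    (2 * d i) * (dd 0 : ℤ) + (2 * d j) * (dd 1 : ℤ) = -2 * (d i * A i j)) ∧
  (∀ i j, i ≠ j →
    MvPolynomial.coeff (Finsupp.single (0 : Fin 2) (-(A i j)).toNat) (Q i j) ≠ 0)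

/-- The defining relations of the quiver Hecke algebra `R(β)`, where
`S ⊆ I^m` is the set of admissible sequences (`I^β`; `e(ν) = 0` for `ν ∉ S`). -/
inductive Rel (Q : Fin n → Fin n → MvPolynomial (Fin 2) k) (S : Set (Fin m → Fin n)) :
    FA k n m → FA k n m → Prop
  | e_orth (ν ν' : Fin m → Fin n) (hne : ν ≠ ν') : Rel Q S (Eg k ν * Eg k ν') 0
  | e_idem (ν : Fin m → Fin n) : Rel Q S (Eg k ν * Eg k ν) (Eg k ν)
  | e_sum : Rel Q S (∑ ν : Fin m → Fin n, Eg k ν) 1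
  | e_out (ν : Fin m → Fin n) (hν : ν ∉ S) : Rel Q S (Eg k ν) 0
  | xx (p q : Fin m) : Rel Q S (Xg k p * Xg k q) (Xg k q * Xg k p)
  | xe (p : Fin m) (ν : Fin m → Fin n) : Rel Q S (Xg k p * Eg k ν) (Eg k ν * Xg k p)
  | te (j : ℕ) (h : j + 1 < m) (ν : Fin m → Fin n) :
      Rel Q S (Tg k j h * Eg k ν) (Eg k (swapSeq j h ν) * Tg k j h)
  | tt (a : ℕ) (ha : a + 1 < m) (b : ℕ) (hb : b + 1 < m) (hab : a + 1 < b ∨ b + 1 < a) :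
      Rel Q S (Tg k a ha * Tg k b hb) (Tg k b hb * Tg k a ha)
  | tsq (j : ℕ) (h : j + 1 < m) (ν : Fin m → Fin n) :
      Rel Q S (Tg k j h * Tg k j h * Eg k ν)
        (eval2 k (Q (ν ⟨j, Nat.lt_of_succ_lt h⟩) (ν ⟨j + 1, h⟩))
          (Xg k ⟨j, Nat.lt_of_succ_lt h⟩) (Xg k ⟨j + 1, h⟩) * Eg k ν)
  | tx_left (j : ℕ) (h : j + 1 < m) (ν : Fin m → Fin n)
      (hv : ν ⟨j, Nat.lt_of_succ_lt h⟩ = ν ⟨j + 1, h⟩) :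
      Rel Q S (Tg k j h * Xg k ⟨j, Nat.lt_of_succ_lt h⟩ * Eg k ν)
        (Xg k ⟨j + 1, h⟩ * Tg k j h * Eg k ν - Eg k ν)
  | tx_right (j : ℕ) (h : j + 1 < m) (ν : Fin m → Fin n)
      (hv : ν ⟨j, Nat.lt_of_succ_lt h⟩ = ν ⟨j + 1, h⟩) :
      Rel Q S (Tg k j h * Xg k ⟨j + 1, h⟩ * Eg k ν)
        (Xg k ⟨j, Nat.lt_of_succ_lt h⟩ * Tg k j h * Eg k ν + Eg k ν)
  | tx_comm (j : ℕ) (h : j + 1 < m) (ν : Fin m → Fin n) (p : Fin m)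
      (hcase : ν ⟨j, Nat.lt_of_succ_lt h⟩ ≠ ν ⟨j + 1, h⟩ ∨ ((p : ℕ) ≠ j ∧ (p : ℕ) ≠ j + 1)) :
      Rel Q S (Tg k j h * Xg k p * Eg k ν) (Xg k (posSwap j h p) * Tg k j h * Eg k ν)
  | braid_ne (j : ℕ) (h1 : j + 1 < m) (h2 : j + 2 < m) (ν : Fin m → Fin n)
      (hv : ν ⟨j, by omega⟩ ≠ ν ⟨j + 2, h2⟩) :
      Rel Q S
        (Tg k (j + 1) (by omega) * Tg k j h1 * Tg k (j + 1) (by omega) * Eg k ν)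
        (Tg k j h1 * Tg k (j + 1) (by omega) * Tg k j h1 * Eg k ν)
  | braid_eq (j : ℕ) (h1 : j + 1 < m) (h2 : j + 2 < m) (ν : Fin m → Fin n)
      (hv : ν ⟨j, by omega⟩ = ν ⟨j + 2, h2⟩) :
      Rel Q S
        (Tg k (j + 1) (by omega) * Tg k j h1 * Tg k (j + 1) (by omega) * Eg k ν)
        (Tg k j h1 * Tg k (j + 1) (by omega) * Tg k j h1 * Eg k ν +
          eval3 k (Qbar k (Q (ν ⟨j, by omega⟩) (ν ⟨j + 1, h1⟩)))
            (Xg k ⟨j, by omega⟩) (Xg k ⟨j + 1, h1⟩) (Xg k ⟨j + 2, h2⟩) * Eg k ν)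

/-- The extra cyclotomic relations `x_m^{⟨h_{ν_m}, Λ⟩} e(ν) = 0` (`ν ∈ I^β`),
where `Λ` is written in fundamental-weight coordinates, so `⟨h_i, Λ⟩ = Λ i`. -/
inductive CycRel (Λ : Fin n → ℤ) (S : Set (Fin m → Fin n)) :
    FA k n m → FA k n m → Prop
  | cyc (ν : Fin m → Fin n) (hν : ν ∈ S) (p : Fin m) (hp : (p : ℕ) + 1 = m) :
      CycRel Λ S (Xg k p ^ (Λ (ν p)).toNat * Eg k ν) 0

/-- Relations of the cyclotomic quiver Hecke algebra `R^Λ(β)`. -/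
def CRel (Q : Fin n → Fin n → MvPolynomial (Fin 2) k) (S : Set (Fin m → Fin n))
    (Λ : Fin n → ℤ) : FA k n m → FA k n m → Prop :=
  fun a b => Rel k Q S a b ∨ CycRel k Λ S a b

/-- The `j`-th column of the Cartan matrix: the simple root `α_j` written in
fundamental-weight coordinates (`⟨h_i, α_j⟩ = A i j`). -/
def αcol (A : Fin n → Fin n → ℤ) (j : Fin n) : Fin n → ℤ := fun i => A i j

/-- `FPath A Λ [i₁, …, i_ℓ] ξ` means `f̃_{i₁} ⋯ f̃_{i_ℓ} Λ = ξ` in the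
minuscule crystal realized on the Weyl orbit of `Λ`:
`f̃_j μ = μ - α_j` whenever `⟨h_j, μ⟩ = 1` (and is undefined otherwise). -/
inductive FPath (A : Fin n → Fin n → ℤ) (Λ : Fin n → ℤ) :
    List (Fin n) → (Fin n → ℤ) → Prop
  | nil : FPath A Λ [] Λ
  | cons (j : Fin n) (l : List (Fin n)) (ξ : Fin n → ℤ) :
      FPath A Λ l ξ → ξ j = 1 → FPath A Λ (j :: l) (ξ - αcol A j)

/-- The simple reflection `s_j μ = μ - ⟨h_j, μ⟩ α_j` on the weight lattice. -/
def sRef (A : Fin n → Fin n → ℤ) (j : Fin n) (μ : Fin n → ℤ) : Fin n → ℤ :=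
  fun i => μ i - μ j * A i j

/-- The Weyl group orbit of `Λ` (the Weyl group being generated by the
involutions `s_j`, its orbit consists of images under words in the `s_j`). -/
def orbitW (A : Fin n → Fin n → ℤ) (Λ : Fin n → ℤ) : Set (Fin n → ℤ) :=
  {ξ | ∃ l : List (Fin n), l.foldr (sRef A) Λ = ξ}

end QHA

namespace QHA

variable (k : Type) [Field k] {n : ℕ}

section Paths

variable (A : Fin n → Fin n → ℤ) (Λ ξ : Fin n → ℤ) (ℓ : ℕ)

/-- The set `Pa(b)` of paths from the highest weight `Λ` to `ξ = wt(b)`,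
as length-`ℓ` sequences. -/
def PaT : Type := {ν : Fin ℓ → Fin n // FPath A Λ (List.ofFn ν) ξ}

/-- The underlying vector space of `Sp(b)`, with basis (the delta functions of)
the paths in `Pa(b)`. -/
abbrev PaV : Type := PaT A Λ ξ ℓ → k

/-- The prescribed action of `e(μ)`: projection onto the span of `p(μ)`. -/
noncomputable def eOpPa (μ : Fin ℓ → Fin n) : Module.End k (PaV k A Λ ξ ℓ) :=
  LinearMap.pi fun ν => if ν.val = μ then LinearMap.proj ν else 0

/-- The prescribed action of `τ_j`:  `p(ν) ↦ p(s_j ν)` if `s_j ν ∈ Pa(b)`, else `0`. -/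
noncomputable def tOpPa (j : ℕ) (h : j + 1 < ℓ) : Module.End k (PaV k A Λ ξ ℓ) :=
  LinearMap.pi fun ν =>
    if hh : FPath A Λ (List.ofFn (swapSeq j h ν.val)) ξ then
      LinearMap.proj (⟨swapSeq j h ν.val, hh⟩ : PaT A Λ ξ ℓ) else 0

/-- `I^β` for `β = Λ - ξ`:  sequences whose content is `β`
(written in fundamental-weight coordinates via `α`-columns). -/
def Iβ : Set (Fin ℓ → Fin n) :=
  {ν | ∑ p : Fin ℓ, αcol A (ν p) = fun i => Λ i - ξ i}

end Paths

section Aux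

theorem FPath.cons_inv {A : Fin n → Fin n → ℤ} {Λ η : Fin n → ℤ} {a : Fin n} {l : List (Fin n)}
    (h : FPath A Λ (a :: l) η) :
    FPath A Λ l (η + αcol A a) ∧ (η + αcol A a) a = 1 := by
  cases h with
  | cons j l ξ h1 h2 => simpa using ⟨h1, h2⟩

theorem FPath.mk' {A : Fin n → Fin n → ℤ} {Λ η : Fin n → ℤ} {a : Fin n} {l : List (Fin n)}
    (h1 : FPath A Λ l (η + αcol A a)) (h2 : (η + αcol A a) a = 1) : FPath A Λ (a :: l) η := by
  have := FPath.cons a l _ h1 h2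
  simpa using this

theorem FPath.swap {A : Fin n → Fin n → ℤ} (hsymm : ∀ i j, A i j = A j i)
    {Λ : Fin n → ℤ} {a b : Fin n} (hab : A a b = 0) (w : List (Fin n)) :
    ∀ (u : List (Fin n)) (η : Fin n → ℤ),
    FPath A Λ (u ++ a :: b :: w) η → FPath A Λ (u ++ b :: a :: w) η
  | [], η, h => by
    obtain ⟨h1, h2⟩ := FPath.cons_inv h
    obtain ⟨h3, h4⟩ := FPath.cons_inv h1
    have hba := hsymm a b
    refine FPath.mk' (FPath.mk' ?_ ?_) ?_
    · rwa [add_right_comm]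
    · simp only [Pi.add_apply, αcol] at *; omega
    · simp only [Pi.add_apply, αcol] at *; omega
  | c :: u, η, h => by
    obtain ⟨h1, h2⟩ := FPath.cons_inv h
    exact FPath.mk' (FPath.swap hsymm hab w u _ h1) h2

theorem FPath.drop {A : Fin n → Fin n → ℤ} {Λ : Fin n → ℤ} (w : List (Fin n)) :
    ∀ (u : List (Fin n)) (η : Fin n → ℤ), FPath A Λ (u ++ w) η → ∃ η', FPath A Λ w η'
  | [], η, h => ⟨η, h⟩
  | c :: u, η, h => FPath.drop w u _ (FPath.cons_inv h).1

theorem FPath.sum_eq {A : Fin n → Fin n → ℤ} {Λ : Fin n → ℤ} {l : List (Fin n)} {η : Fin n → ℤ}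
    (h : FPath A Λ l η) : (l.map (αcol A)).sum = Λ - η := by
  induction h with
  | nil => simp
  | cons j l ξ h1 h2 ih => simp [ih]; abel

theorem FPath.weight_unique {A : Fin n → Fin n → ℤ} {Λ : Fin n → ℤ} {l : List (Fin n)}
    {η η' : Fin n → ℤ} (h : FPath A Λ l η) (h' : FPath A Λ l η') : η = η' := by
  have := h.sum_eq.symm.trans h'.sum_eq
  simpa using this

theorem FPath.swap_inv {A : Fin n → Fin n → ℤ} (hdiag : ∀ i, A i i = 2)
    (hsymm : ∀ i j, A i j = A j i)
    (hoff : ∀ i j, i ≠ j → A i j = 0 ∨ A i j = -1)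
    {Λ : Fin n → ℤ} {a b : Fin n} {u w : List (Fin n)} {η η' : Fin n → ℤ}
    (h : FPath A Λ (u ++ a :: b :: w) η) (h' : FPath A Λ (u ++ b :: a :: w) η') : A a b = 0 := by
  obtain ⟨_, h⟩ := FPath.drop _ _ _ h
  obtain ⟨_, h'⟩ := FPath.drop _ _ _ h'
  obtain ⟨h1, h2⟩ := FPath.cons_inv h
  obtain ⟨h3, h4⟩ := FPath.cons_inv h1
  obtain ⟨h1', h2'⟩ := FPath.cons_inv h'
  obtain ⟨h3', h4'⟩ := FPath.cons_inv h1'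
  have e := h3.weight_unique h3'
  have ea := congrFun e a
  have eb := congrFun e b
  have hba := hsymm a b
  have := hdiag a
  have := hdiag b
  by_cases hab : a = b
  · subst hab
    simp only [Pi.add_apply, αcol] at *; omega
  · have := hoff a b hab
    simp only [Pi.add_apply, αcol] at *; omega

theorem FPath.ne_next {A : Fin n → Fin n → ℤ} (hdiag : ∀ i, A i i = 2)
    {Λ : Fin n → ℤ} {a b : Fin n} {u w : List (Fin n)} {η : Fin n → ℤ}
    (h : FPath A Λ (u ++ a :: b :: w) η) : a ≠ b := by
  rintro rfl
  obtain ⟨_, h⟩ := FPath.drop _ _ _ h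
  obtain ⟨h1, h2⟩ := FPath.cons_inv h
  obtain ⟨h3, h4⟩ := FPath.cons_inv h1
  have := hdiag a
  simp only [Pi.add_apply, αcol] at *; omega

theorem FPath.ne_next2 {A : Fin n → Fin n → ℤ} (hdiag : ∀ i, A i i = 2)
    (hsymm : ∀ i j, A i j = A j i)
    (hoff : ∀ i j, i ≠ j → A i j = 0 ∨ A i j = -1)
    {Λ : Fin n → ℤ} {a b c : Fin n} {u w : List (Fin n)} {η : Fin n → ℤ}
    (h : FPath A Λ (u ++ a :: b :: c :: w) η) : a ≠ c := by
  rintro rfl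
  have hab := h.ne_next hdiag
  obtain ⟨_, h⟩ := FPath.drop _ _ _ h
  obtain ⟨h1, h2⟩ := FPath.cons_inv h
  obtain ⟨h3, h4⟩ := FPath.cons_inv h1
  obtain ⟨h5, h6⟩ := FPath.cons_inv h3
  have := hdiag a
  have := hdiag b
  have := hsymm a b
  have := hoff a b hab
  simp only [Pi.add_apply, αcol] at *; omega

theorem FPath.mem_orbit {A : Fin n → Fin n → ℤ} {Λ : Fin n → ℤ} {l : List (Fin n)}
    {η : Fin n → ℤ} (h : FPath A Λ l η) : η ∈ orbitW A Λ := by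
  induction h with
  | nil => exact ⟨[], rfl⟩
  | cons j l ξ h1 h2 ih =>
    obtain ⟨l', hl'⟩ := ih
    refine ⟨j :: l', ?_⟩
    rw [List.foldr_cons, hl']
    ext i
    simp [sRef, h2, αcol]

/-- Elementary commutation of two adjacent orthogonal letters. -/
def Sw (A : Fin n → Fin n → ℤ) (l l' : List (Fin n)) : Prop :=
  ∃ u a b w, A a b = 0 ∧ l = u ++ a :: b :: w ∧ l' = u ++ b :: a :: w

theorem Sw.cons {A : Fin n → Fin n → ℤ} {l l' : List (Fin n)} (c : Fin n) (h : Sw A l l') :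
    Sw A (c :: l) (c :: l') := by
  obtain ⟨u, a, b, w, h, rfl, rfl⟩ := h
  exact ⟨c :: u, a, b, w, h, rfl, rfl⟩

theorem conn_cons {A : Fin n → Fin n → ℤ} {l l' : List (Fin n)} (c : Fin n)
    (h : Relation.ReflTransGen (Sw A) l l') :
    Relation.ReflTransGen (Sw A) (c :: l) (c :: l') :=
  by
  induction h with
  | refl => exact .refl
  | tail _ h ih => exact ih.tail (h.cons c)

theorem conn_length {A : Fin n → Fin n → ℤ} {l l' : List (Fin n)}
    (h : Relation.ReflTransGen (Sw A) l l') : l.length = l'.length := by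
  induction h with
  | refl => rfl
  | tail _ h ih =>
    obtain ⟨u, a, b, w, h, rfl, rfl⟩ := h
    rw [ih]; simp

theorem conn_front {A : Fin n → Fin n → ℤ} (hsymm : ∀ i j, A i j = A j i)
    (hoff : ∀ i j, i ≠ j → A i j = 0 ∨ A i j = -1) {Λ : Fin n → ℤ}
    (hΛ : ∀ b, Λ b ≠ -1) (hlow : ∀ l η, FPath A Λ l η → ∀ j, -1 ≤ η j) (b : Fin n) :
    ∀ (l : List (Fin n)) (η : Fin n → ℤ), FPath A Λ l η → η b = -1 →
    ∃ l2, FPath A Λ (b :: l2) η ∧ Relation.ReflTransGen (Sw A) l (b :: l2)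
  | [], η, h, hb => by
    cases h
    exact absurd hb (hΛ b)
  | c :: l, η, h, hb => by
    by_cases hcb : c = b
    · subst hcb
      exact ⟨l, h, .refl⟩
    obtain ⟨h1, h2⟩ := FPath.cons_inv h
    have h3 := hlow _ _ h1 b
    have h4 := hoff c b hcb
    have h5 := hsymm c b
    have h6 : A c b = 0 := by
      simp only [Pi.add_apply, αcol] at *; omega
    obtain ⟨l2, h7, h8⟩ := conn_front hsymm hoff hΛ hlow b l _ h1
      (by simp only [Pi.add_apply, αcol] at *; omega)
    refine ⟨c :: l2, FPath.swap hsymm h6 l2 [] _ (FPath.mk' h7 h2), ?_⟩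
    exact (conn_cons c h8).tail ⟨[], c, b, l2, h6, rfl, rfl⟩

theorem conn_all {A : Fin n → Fin n → ℤ} (hdiag : ∀ i, A i i = 2)
    (hsymm : ∀ i j, A i j = A j i)
    (hoff : ∀ i j, i ≠ j → A i j = 0 ∨ A i j = -1) {Λ : Fin n → ℤ}
    (hΛ : ∀ b, Λ b ≠ -1) (hlow : ∀ l η, FPath A Λ l η → ∀ j, -1 ≤ η j) :
    ∀ (l' l : List (Fin n)) (η : Fin n → ℤ), FPath A Λ l η → FPath A Λ l' η →
    l.length = l'.length → Relation.ReflTransGen (Sw A) l l'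
  | [], l, η, h, h', hl => by
    rw [List.length_nil, List.length_eq_zero_iff] at hl
    rw [hl]
  | b :: l', l, η, h, h', hl => by
    obtain ⟨h1, h2⟩ := FPath.cons_inv h'
    have := hdiag b
    obtain ⟨l2, h3, h4⟩ := conn_front hsymm hoff hΛ hlow b l η h
      (by simp only [Pi.add_apply, αcol] at *; omega)
    have hl2 := conn_length h4
    refine h4.trans (conn_cons b ?_)
    refine conn_all hdiag hsymm hoff hΛ hlow l' l2 _ (FPath.cons_inv h3).1 h1 ?_
    simp at hl hl2; omega

/-! Functions versus lists. -/

theorem swapSeq_apply {m : ℕ} (j : ℕ) (h : j + 1 < m) (ν : Fin m → Fin n) (p : Fin m) :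
    swapSeq j h ν p = if (p : ℕ) = j then ν ⟨j + 1, h⟩ else
      if (p : ℕ) = j + 1 then ν ⟨j, Nat.lt_of_succ_lt h⟩ else ν p := by
  simp only [swapSeq, posSwap, Function.comp, Equiv.swap_apply_def, Fin.ext_iff]
  split_ifs <;> rfl

theorem swapSeq_invol {m : ℕ} (j : ℕ) (h : j + 1 < m) (ν : Fin m → Fin n) :
    swapSeq j h (swapSeq j h ν) = ν := by
  funext p
  simp [swapSeq, posSwap]

theorem ofFn_decomp {m : ℕ} (j : ℕ) (h : j + 1 < m) (ν : Fin m → Fin n) :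
    ∃ u w : List (Fin n), u.length = j ∧
      List.ofFn ν = u ++ ν ⟨j, Nat.lt_of_succ_lt h⟩ :: ν ⟨j + 1, h⟩ :: w ∧
      w = (List.ofFn ν).drop (j + 2) := by
  refine ⟨(List.ofFn ν).take j, (List.ofFn ν).drop (j + 2), ?_, ?_, rfl⟩
  · simp; omega
  · conv_lhs => rw [← List.take_append_drop j (List.ofFn ν)]
    rw [List.drop_eq_getElem_cons (by simp; omega), List.drop_eq_getElem_cons (by simp; omega)]
    simp

theorem ofFn_swap {m : ℕ} (j : ℕ) (h : j + 1 < m) (ν : Fin m → Fin n)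
    {u w : List (Fin n)} {a b : Fin n} (hu : u.length = j)
    (e : List.ofFn ν = u ++ a :: b :: w) :
    List.ofFn (swapSeq j h ν) = u ++ b :: a :: w := by
  have key : ∀ (i : ℕ) (hi : i < m), ν ⟨i, hi⟩ = (u ++ a :: b :: w)[i]'(by
      rw [← e]; simpa using hi) := by
    intro i hi
    simp [← e]
  have hlen : m = (u ++ a :: b :: w).length := by rw [← e]; simp
  apply List.ext_getElem
  · simp at hlen ⊢; omega
  · intro i h1 h2
    rw [List.getElem_ofFn, swapSeq_apply]
    simp only [key, Fin.eta]
    subst hu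
    split_ifs with c1 c2
    · subst c1; simp
    · subst c2; simp
    · rw [List.getElem_append, List.getElem_append]
      split_ifs with c3
      · rfl
      · obtain ⟨q, hq⟩ : ∃ q, i - u.length = q + 2 := ⟨i - u.length - 2, by omega⟩
        simp [hq]

section F
variable {A : Fin n → Fin n → ℤ} (hdiag : ∀ i, A i i = 2)
    (hsymm : ∀ i j, A i j = A j i)
    (hoff : ∀ i j, i ≠ j → A i j = 0 ∨ A i j = -1) {Λ ξ : Fin n → ℤ} {m : ℕ}

theorem path_swap_iff (hdiag : ∀ i, A i i = 2)
    (hsymm : ∀ i j, A i j = A j i)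
    (hoff : ∀ i j, i ≠ j → A i j = 0 ∨ A i j = -1) (ν : Fin m → Fin n)
    (hν : FPath A Λ (List.ofFn ν) ξ) (j : ℕ) (h : j + 1 < m) :
    FPath A Λ (List.ofFn (swapSeq j h ν)) ξ ↔
      A (ν ⟨j, Nat.lt_of_succ_lt h⟩) (ν ⟨j + 1, h⟩) = 0 := by
  obtain ⟨u, w, hu, e, -⟩ := ofFn_decomp j h ν
  rw [ofFn_swap j h ν hu e]
  rw [e] at hν
  exact ⟨fun h' => hν.swap_inv hdiag hsymm hoff h', fun h' => FPath.swap hsymm h' _ _ _ hν⟩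

theorem path_ne (hdiag : ∀ i, A i i = 2) (ν : Fin m → Fin n)
    (hν : FPath A Λ (List.ofFn ν) ξ) (j : ℕ) (h : j + 1 < m) :
    ν ⟨j, Nat.lt_of_succ_lt h⟩ ≠ ν ⟨j + 1, h⟩ := by
  obtain ⟨u, w, hu, e, -⟩ := ofFn_decomp j h ν
  rw [e] at hν
  exact hν.ne_next hdiag

theorem path_ne2 (hdiag : ∀ i, A i i = 2)
    (hsymm : ∀ i j, A i j = A j i)
    (hoff : ∀ i j, i ≠ j → A i j = 0 ∨ A i j = -1) (ν : Fin m → Fin n)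
    (hν : FPath A Λ (List.ofFn ν) ξ) (j : ℕ) (h : j + 2 < m) :
    ν ⟨j, by omega⟩ ≠ ν ⟨j + 2, h⟩ := by
  obtain ⟨u, w, hu, e, hw⟩ := ofFn_decomp j (by omega) ν
  rw [List.drop_eq_getElem_cons (by simp; omega)] at hw
  rw [hw] at e
  rw [e] at hν
  simpa using hν.ne_next2 hdiag hsymm hoff

theorem path_mem (ν : Fin m → Fin n)
    (hν : FPath A Λ (List.ofFn ν) ξ) : ν ∈ Iβ A Λ ξ m := by
  have := hν.sum_eq
  rw [List.map_ofFn, List.sum_ofFn] at this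
  exact this

theorem path_last (ν : Fin m → Fin n)
    (hν : FPath A Λ (List.ofFn ν) ξ) (p : Fin m) (hp : (p : ℕ) + 1 = m) : Λ (ν p) = 1 := by
  have e : List.ofFn ν = (List.ofFn ν).take p ++ [ν p] := by
    conv_lhs => rw [← List.take_append_drop p (List.ofFn ν)]
    rw [List.drop_eq_getElem_cons (by simp), List.drop_eq_nil_of_le (by simp; omega)]
    simp
  rw [e] at hν
  obtain ⟨_, h⟩ := FPath.drop _ _ _ hν
  obtain ⟨h1, h2⟩ := FPath.cons_inv h
  have := h1.weight_unique .nil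
  rwa [this] at h2

end F

/-! Operators. -/

variable {A : Fin n → Fin n → ℤ} {Λ ξ : Fin n → ℤ} {m : ℕ}

/-- The path with given underlying sequence. -/
def mkP (ν : Fin m → Fin n) (h : FPath A Λ (List.ofFn ν) ξ) : PaT A Λ ξ m := ⟨ν, h⟩

/-- The underlying sequence of a path. -/
def seqP (ν : PaT A Λ ξ m) : Fin m → Fin n := ν.val

theorem seqP_prop (ν : PaT A Λ ξ m) : FPath A Λ (List.ofFn (seqP ν)) ξ := ν.property

theorem seqP_mkP (ν : Fin m → Fin n) (h : FPath A Λ (List.ofFn ν) ξ) :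
    seqP (mkP ν h) = ν := rfl

theorem mkP_seqP (ν : PaT A Λ ξ m) (h : FPath A Λ (List.ofFn (seqP ν)) ξ) :
    mkP (seqP ν) h = ν := rfl

theorem seqP_inj {ν μ : PaT A Λ ξ m} (h : seqP ν = seqP μ) : ν = μ := Subtype.ext h

/-- Extension by zero to all sequences. -/
noncomputable def ex0 (f : PaV k A Λ ξ m) (ν : Fin m → Fin n) : k :=
  if h : FPath A Λ (List.ofFn ν) ξ then f (mkP ν h) else 0

theorem ex0_seqP (f : PaV k A Λ ξ m) (ν : PaT A Λ ξ m) : ex0 k f (seqP ν) = f ν := by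
  unfold ex0
  rw [dif_pos (seqP_prop ν), mkP_seqP]

theorem paV_ext {f g : PaV k A Λ ξ m}
    (h : ∀ ν, FPath A Λ (List.ofFn ν) ξ → ex0 k f ν = ex0 k g ν) : f = g := by
  funext ν
  rw [← ex0_seqP k f, ← ex0_seqP k g]
  exact h _ (seqP_prop ν)

theorem end_ext {S T : Module.End k (PaV k A Λ ξ m)}
    (h : ∀ f ν, FPath A Λ (List.ofFn ν) ξ → ex0 k (S f) ν = ex0 k (T f) ν) : S = T :=
  LinearMap.ext fun f => paV_ext k (h f)

theorem t_apply (j : ℕ) (h : j + 1 < m) (f : PaV k A Λ ξ m) (ν : PaT A Λ ξ m) :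
    tOpPa k A Λ ξ m j h f ν = ex0 k f (swapSeq j h (seqP ν)) := by
  unfold ex0
  by_cases hh : FPath A Λ (List.ofFn (swapSeq j h (seqP ν))) ξ
  · rw [dif_pos hh]
    exact LinearMap.congr_fun (dif_pos hh) f
  · rw [dif_neg hh]
    exact LinearMap.congr_fun (dif_neg hh) f

theorem e_apply (μ : Fin m → Fin n) (f : PaV k A Λ ξ m) (ν : PaT A Λ ξ m) :
    eOpPa k A Λ ξ m μ f ν = if seqP ν = μ then f ν else 0 := by
  by_cases hh : seqP ν = μ
  · rw [if_pos hh]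
    exact LinearMap.congr_fun (if_pos hh) f
  · rw [if_neg hh]
    exact LinearMap.congr_fun (if_neg hh) f

theorem ex0_t (j : ℕ) (h : j + 1 < m) (f : PaV k A Λ ξ m) (ν : Fin m → Fin n) :
    ex0 k (tOpPa k A Λ ξ m j h f) ν =
      if FPath A Λ (List.ofFn ν) ξ then ex0 k f (swapSeq j h ν) else 0 := by
  by_cases hν : FPath A Λ (List.ofFn ν) ξ
  · rw [if_pos hν, ex0, dif_pos hν, t_apply, seqP_mkP]
  · rw [if_neg hν, ex0, dif_neg hν]

theorem ex0_e (μ : Fin m → Fin n) (f : PaV k A Λ ξ m) (ν : Fin m → Fin n) :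
    ex0 k (eOpPa k A Λ ξ m μ f) ν = if ν = μ then ex0 k f ν else 0 := by
  by_cases hν : FPath A Λ (List.ofFn ν) ξ
  · rw [ex0, dif_pos hν, e_apply, seqP_mkP, ex0, dif_pos hν]
  · rw [ex0, dif_neg hν, ex0, dif_neg hν, ite_self]

theorem ex0_zero (ν : Fin m → Fin n) : ex0 k (0 : PaV k A Λ ξ m) ν = 0 := by
  unfold ex0
  split_ifs <;> rfl

theorem ex0_smul (c : k) (f : PaV k A Λ ξ m) (ν : Fin m → Fin n) :
    ex0 k (c • f) ν = c * ex0 k f ν := by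
  unfold ex0
  split_ifs <;> simp

theorem ex0_not (f : PaV k A Λ ξ m) (ν : Fin m → Fin n)
    (h : ¬ FPath A Λ (List.ofFn ν) ξ) : ex0 k f ν = 0 := by
  simp [ex0, h]

theorem e_zero (μ : Fin m → Fin n) (h : ¬ FPath A Λ (List.ofFn μ) ξ) :
    eOpPa k A Λ ξ m μ = 0 := by
  apply end_ext
  intro f ν hν
  rw [ex0_e]
  have : ν ≠ μ := by rintro rfl; exact h hν
  simp [this, ex0_zero]

/-- The action on generators. -/
noncomputable def genOp (A : Fin n → Fin n → ℤ) (Λ ξ : Fin n → ℤ) (m : ℕ) :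
    Gen n m → Module.End k (PaV k A Λ ξ m)
  | .e ν => eOpPa k A Λ ξ m ν
  | .x _ => 0
  | .t j h => tOpPa k A Λ ξ m j h

/-- The action of the free algebra. -/
noncomputable def faOp (A : Fin n → Fin n → ℤ) (Λ ξ : Fin n → ℤ) (m : ℕ) :
    FA k n m →ₐ[k] Module.End k (PaV k A Λ ξ m) :=
  FreeAlgebra.lift k (genOp k A Λ ξ m)

theorem faOp_e (ν : Fin m → Fin n) : faOp k A Λ ξ m (Eg k ν) = eOpPa k A Λ ξ m ν := by
  simp [faOp, Eg, genOp]

theorem faOp_x (p : Fin m) : faOp k A Λ ξ m (Xg k p) = 0 := by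
  simp [faOp, Xg, genOp]

theorem faOp_t (j : ℕ) (h : j + 1 < m) :
    faOp k A Λ ξ m (Tg k j h) = tOpPa k A Λ ξ m j h := by
  simp [faOp, Tg, genOp]

theorem faOp_eval2 (q : MvPolynomial (Fin 2) k) (a b : Fin m) :
    faOp k A Λ ξ m (eval2 k q (Xg k a) (Xg k b)) =
      algebraMap k _ (MvPolynomial.coeff 0 q) := by
  unfold eval2
  simp only [map_sum, map_mul, map_pow, faOp_x, AlgHom.commutes]
  rw [Finset.sum_eq_single 0]
  · simp
  · intro d _ hd
    have : d 0 ≠ 0 ∨ d 1 ≠ 0 := by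
      by_contra! hc
      apply hd
      ext i
      fin_cases i <;> simp [hc]
    rcases this with h | h <;> simp [h]
  · intro h
    simp [MvPolynomial.notMem_support_iff.1 h]

theorem coeff_zero_Q {Q : Fin n → Fin n → MvPolynomial (Fin 2) k}
    (hoff : ∀ i j, i ≠ j → A i j = 0 ∨ A i j = -1)
    (hQ : QAdmissible k A (fun _ => 1) Q) (i j : Fin n) (hij : i ≠ j) :
    MvPolynomial.coeff 0 (Q i j) = if A i j = 0 then 1 else 0 := by
  obtain ⟨-, -, h1, h2, -⟩ := hQ
  split_ifs with h
  · rw [h1 i j hij (by simpa using h)]; simp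
  · by_contra hc
    have := h2 i j hij 0 (MvPolynomial.mem_support_iff.2 hc)
    have := hoff i j hij
    simp at *
    omega

theorem faOp_rel {Q : Fin n → Fin n → MvPolynomial (Fin 2) k} (hdiag : ∀ i, A i i = 2)
    (hsymm : ∀ i j, A i j = A j i)
    (hoff : ∀ i j, i ≠ j → A i j = 0 ∨ A i j = -1)
    (hQ : QAdmissible k A (fun _ => 1) Q) {x y : FA k n m}
    (hr : Rel k Q (Iβ A Λ ξ m) x y) : faOp k A Λ ξ m x = faOp k A Λ ξ m y := by
  cases hr with
  | e_orth ν ν' hne =>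
    simp only [map_mul, faOp_e, map_zero]
    apply end_ext
    intro f μ hμ
    simp only [Module.End.mul_apply, ex0_e]
    split_ifs with h1 h2
    · exact absurd (h1.symm.trans h2) hne
    · simp [ex0_zero]
    · simp [ex0_zero]
  | e_idem ν =>
    simp only [map_mul, faOp_e]
    apply end_ext
    intro f μ hμ
    simp only [Module.End.mul_apply, ex0_e]
    split_ifs <;> rfl
  | e_sum =>
    simp only [map_sum, faOp_e, map_one]
    apply LinearMap.ext
    intro f
    funext ν
    simp only [LinearMap.sum_apply, Finset.sum_apply, Module.End.one_apply]
    simp only [e_apply]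
    simp
  | e_out ν hν =>
    simp only [faOp_e, map_zero]
    exact e_zero k ν fun h => hν (path_mem ν h)
  | xx p q => simp [faOp_x]
  | xe p ν => simp [faOp_x]
  | te j h ν =>
    simp only [map_mul, faOp_e, faOp_t]
    apply end_ext
    intro f μ hμ
    simp only [Module.End.mul_apply, ex0_e, ex0_t, hμ, if_true]
    have : swapSeq j h μ = ν ↔ μ = swapSeq j h ν := by
      constructor
      · rintro rfl; rw [swapSeq_invol]
      · rintro rfl; rw [swapSeq_invol]
    simp [this]
  | tt a ha b hb hab =>
    simp only [map_mul, faOp_t]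
    apply end_ext
    intro f μ hμ
    simp only [Module.End.mul_apply, ex0_t, hμ, if_true]
    have hc : swapSeq a ha (swapSeq b hb μ) = swapSeq b hb (swapSeq a ha μ) := by
      funext p
      simp only [swapSeq_apply]
      split_ifs <;> first | rfl | omega
    rw [hc]
    by_cases hz : FPath A Λ (List.ofFn (swapSeq b hb (swapSeq a ha μ))) ξ
    · have : FPath A Λ (List.ofFn (swapSeq a ha μ)) ξ ↔
          FPath A Λ (List.ofFn (swapSeq b hb μ)) ξ := by
        constructor
        · intro h1
          rw [path_swap_iff hdiag hsymm hoff _ h1] at hz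
          rw [path_swap_iff hdiag hsymm hoff _ hμ]
          simp only [swapSeq_apply] at hz
          split_ifs at hz <;> first | omega | exact hz
        · intro h1
          rw [← hc, path_swap_iff hdiag hsymm hoff _ h1] at hz
          rw [path_swap_iff hdiag hsymm hoff _ hμ]
          simp only [swapSeq_apply] at hz
          split_ifs at hz <;> first | omega | exact hz
      simp [this]
    · simp [ex0_not k f _ hz]
  | tsq j h ν =>
    simp only [map_mul, faOp_t, faOp_eval2, faOp_e]
    by_cases hν : FPath A Λ (List.ofFn ν) ξ
    swap
    · simp [e_zero k ν hν]
    rw [coeff_zero_Q k hoff hQ _ _ (path_ne hdiag ν hν j h)]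
    have hi := path_swap_iff hdiag hsymm hoff ν hν j h
    apply end_ext
    intro f μ hμ
    rw [Module.End.mul_apply, Module.End.mul_apply, Module.End.mul_apply,
      Module.algebraMap_end_apply, ex0_smul]
    simp only [ex0_t, hμ, if_true, swapSeq_invol, ex0_e]
    by_cases hmn : μ = ν
    · subst hmn
      by_cases hs : FPath A Λ (List.ofFn (swapSeq j h μ)) ξ
      · simp [hs, hi.1 hs]
      · have : ¬ A (μ ⟨j, Nat.lt_of_succ_lt h⟩) (μ ⟨j + 1, h⟩) = 0 := fun h => hs (hi.2 h)
        simp [hs, this]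
    · simp [hmn]
  | tx_left j h ν hv =>
    have := e_zero (A := A) (Λ := Λ) (ξ := ξ) k ν fun hν => path_ne hdiag ν hν j h hv
    simp [faOp_x, faOp_e, this]
  | tx_right j h ν hv =>
    have := e_zero (A := A) (Λ := Λ) (ξ := ξ) k ν fun hν => path_ne hdiag ν hν j h hv
    simp [faOp_x, faOp_e, this]
  | tx_comm j h ν p hcase => simp [faOp_x]
  | braid_ne j h1 h2 ν hv =>
    simp only [map_mul, faOp_t, faOp_e]
    apply end_ext
    intro f μ hμ
    have hc : swapSeq (j + 1) h2 (swapSeq j h1 (swapSeq (j + 1) h2 μ)) =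
        swapSeq j h1 (swapSeq (j + 1) h2 (swapSeq j h1 μ)) := by
      funext p
      simp only [swapSeq_apply]
      split_ifs <;> first | rfl | omega
    simp only [Module.End.mul_apply, ex0_t, hμ, if_true, hc]
    by_cases hz : FPath A Λ (List.ofFn (swapSeq j h1 (swapSeq (j + 1) h2 (swapSeq j h1 μ)))) ξ
    · have n1 : ¬ j = j + 1 + 1 := by omega
      have n2 : ¬ j + 1 + 1 = j := by omega
      have e1 := path_swap_iff hdiag hsymm hoff _ hμ j h1
      have e2 := path_swap_iff hdiag hsymm hoff _ hμ (j + 1) h2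
      by_cases p : FPath A Λ (List.ofFn (swapSeq j h1 μ)) ξ ∧
          FPath A Λ (List.ofFn (swapSeq (j + 1) h2 (swapSeq j h1 μ))) ξ
      · obtain ⟨p1, p2⟩ := p
        have e3 := (path_swap_iff hdiag hsymm hoff _ p1 (j + 1) h2).1 p2
        have e4 := (path_swap_iff hdiag hsymm hoff _ p2 j h1).1 hz
        simp [swapSeq_apply, n1, n2] at e3 e4
        have q1 := e2.2 e4
        have q2 := (path_swap_iff hdiag hsymm hoff _ q1 j h1).2
          (by simpa [swapSeq_apply, n1, n2] using e3)
        simp [p1, p2, q1, q2]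
      · have q : ¬ (FPath A Λ (List.ofFn (swapSeq (j + 1) h2 μ)) ξ ∧
            FPath A Λ (List.ofFn (swapSeq j h1 (swapSeq (j + 1) h2 μ))) ξ) := by
          rintro ⟨q1, q2⟩
          apply p
          have hz' := hz
          rw [← hc] at hz'
          have e3 := (path_swap_iff hdiag hsymm hoff _ q1 j h1).1 q2
          have e4 := (path_swap_iff hdiag hsymm hoff _ q2 (j + 1) h2).1 hz'
          simp [swapSeq_apply, n1, n2] at e3 e4
          have p1 := e1.2 e4
          exact ⟨p1, (path_swap_iff hdiag hsymm hoff _ p1 (j + 1) h2).2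
            (by simpa [swapSeq_apply, n1, n2] using e3)⟩
        rw [← ite_and, ← ite_and, if_neg p, if_neg q]
    · simp [ex0_e, ex0_not k f _ hz]
  | braid_eq j h1 h2 ν hv =>
    have := e_zero (A := A) (Λ := Λ) (ξ := ξ) k ν fun hν =>
      path_ne2 hdiag hsymm hoff ν hν j h2 hv
    simp [faOp_e, this]

theorem ex0_single (ν : PaT A Λ ξ m) (κ : Fin m → Fin n) :
    ex0 k (Pi.single ν 1 : PaV k A Λ ξ m) κ = if κ = (seqP ν) then 1 else 0 := by
  by_cases h : κ = (seqP ν)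
  · subst h
    rw [ex0_seqP, if_pos rfl, Pi.single_eq_same]
  · rw [if_neg h]
    unfold ex0
    split_ifs with hp
    · rw [Pi.single_eq_of_ne]
      exact fun h' => h (congrArg seqP h')
    · rfl

theorem simple_aux (hdiag : ∀ i, A i i = 2)
    (hsymm : ∀ i j, A i j = A j i)
    (hoff : ∀ i j, i ≠ j → A i j = 0 ∨ A i j = -1)
    (hΛ : ∀ b, Λ b ≠ -1) (hlow : ∀ l η, FPath A Λ l η → ∀ j, -1 ≤ η j)
    (U : Submodule k (PaV k A Λ ξ m))
    (hUe : ∀ μ v, v ∈ U → eOpPa k A Λ ξ m μ v ∈ U)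
    (hUt : ∀ j h v, v ∈ U → tOpPa k A Λ ξ m j h v ∈ U) : U = ⊥ ∨ U = ⊤ := by
  by_cases hbot : U = ⊥
  · exact .inl hbot
  right
  obtain ⟨v, hv, hv0⟩ := U.exists_mem_ne_zero_of_ne_bot hbot
  obtain ⟨ν, hν⟩ := Function.ne_iff.1 hv0
  have hs : (Pi.single ν 1 : PaV k A Λ ξ m) ∈ U := by
    have h1 := U.smul_mem (v ν)⁻¹ (hUe (seqP ν) v hv)
    convert h1 using 1
    apply paV_ext
    intro μ _
    rw [ex0_single, ex0_smul, ex0_e]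
    split_ifs with h
    · subst h
      rw [ex0_seqP, inv_mul_cancel₀ hν]
    · simp
  have hcl : ∀ l, Relation.ReflTransGen (Sw A) (List.ofFn (seqP ν)) l →
      ∃ (μ : PaT A Λ ξ m), List.ofFn (seqP μ) = l ∧ (Pi.single μ 1 : PaV k A Λ ξ m) ∈ U := by
    intro l hl
    induction hl with
    | refl => exact ⟨ν, rfl, hs⟩
    | tail _ hst ih =>
      obtain ⟨μ, rfl, hμ⟩ := ih
      obtain ⟨u, a, b, w, hab, e, rfl⟩ := hst
      have hlen := congrArg List.length e
      simp at hlen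
      have hj : u.length + 1 < m := by omega
      have e2 := ofFn_swap u.length hj (seqP μ) rfl e
      have hp : FPath A Λ (List.ofFn (swapSeq u.length hj (seqP μ))) ξ := by
        rw [e2]
        have := (seqP_prop μ)
        rw [e] at this
        exact FPath.swap hsymm hab _ _ _ this
      refine ⟨mkP _ hp, e2, ?_⟩
      convert hUt u.length hj _ hμ using 1
      apply paV_ext
      intro κ hκ
      rw [ex0_t, if_pos hκ, ex0_single, ex0_single, seqP_mkP]
      have hk : κ = swapSeq u.length hj (seqP μ) ↔ swapSeq u.length hj κ = (seqP μ) := by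
        constructor
        · rintro rfl; exact swapSeq_invol _ _ _
        · intro h; rw [← swapSeq_invol _ hj κ, h]
      simp [hk]
  have hall : ∀ μ : PaT A Λ ξ m, (Pi.single μ 1 : PaV k A Λ ξ m) ∈ U := by
    intro μ
    obtain ⟨κ, h1, h2⟩ := hcl _ (conn_all hdiag hsymm hoff hΛ hlow _ _ ξ (seqP_prop ν) (seqP_prop μ) (by simp))
    have : κ = μ := seqP_inj (List.ofFn_injective h1)
    rwa [← this]
  have : Finite (PaT A Λ ξ m) := Subtype.finite
  letI : Fintype (PaT A Λ ξ m) := Fintype.ofFinite _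
  rw [eq_top_iff]
  intro f _
  have : f = ∑ μ, f μ • (Pi.single μ 1 : PaV k A Λ ξ m) := by
    funext κ
    simp [Finset.sum_apply, Pi.single_apply]
  rw [this]
  exact U.sum_mem fun μ _ => U.smul_mem _ (hall μ)

end Aux


theorem sp_is_simple_homogeneous_module_ADE
    (A : Fin n → Fin n → ℤ)
    (hdiag : ∀ i, A i i = 2) (hsymm : ∀ i j, A i j = A j i)
    (hoff : ∀ i j, i ≠ j → A i j = 0 ∨ A i j = -1)
    (Q : Fin n → Fin n → MvPolynomial (Fin 2) k)
    (hQ : QAdmissible k A (fun _ => 1) Q)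
    (i₀ : Fin n)
    (hmin : ∀ ξ ∈ orbitW A (Pi.single i₀ 1), ∀ j, ξ j = -1 ∨ ξ j = 0 ∨ ξ j = 1)
    (hfin : (orbitW A (Pi.single i₀ 1)).Finite)
    (ℓ : ℕ) (ξ : Fin n → ℤ)
    (hb : ∃ ν : Fin ℓ → Fin n, FPath A (Pi.single i₀ 1) (List.ofFn ν) ξ) :
    ∃ ρ : RingQuot (Rel k Q (Iβ A (Pi.single i₀ 1) ξ ℓ)) →ₐ[k]
        Module.End k (PaV k A (Pi.single i₀ 1) ξ ℓ),
      -- the prescribed operators define an action of R(β)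
      (∀ μ : Fin ℓ → Fin n,
        ρ (RingQuot.mkAlgHom k _ (Eg k μ)) = eOpPa k A (Pi.single i₀ 1) ξ ℓ μ) ∧
      (∀ p : Fin ℓ, ρ (RingQuot.mkAlgHom k _ (Xg k p)) = 0) ∧
      (∀ (j : ℕ) (h : j + 1 < ℓ),
        ρ (RingQuot.mkAlgHom k _ (Tg k j h)) = tOpPa k A (Pi.single i₀ 1) ξ ℓ j h) ∧
      -- the generators of the cyclotomic ideal act by zero, so Sp(b) is a
      -- module over the cyclotomic quiver Hecke algebra R^{Λ_{i₀}}(ξ)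
      (∀ (ν : Fin ℓ → Fin n), ν ∈ Iβ A (Pi.single i₀ 1) ξ ℓ →
        ∀ (p : Fin ℓ), (p : ℕ) + 1 = ℓ →
        ρ (RingQuot.mkAlgHom k _ (Xg k p ^ ((Pi.single i₀ 1 : Fin n → ℤ) (ν p)).toNat * Eg k ν)) = 0) ∧
      -- Sp(b) is nonzero and has no nontrivial invariant subspace, i.e. it is simple
      (∃ v : PaV k A (Pi.single i₀ 1) ξ ℓ, v ≠ 0) ∧
      (∀ U : Submodule k (PaV k A (Pi.single i₀ 1) ξ ℓ),
        (∀ a v, v ∈ U → ρ a v ∈ U) → U = ⊥ ∨ U = ⊤) := by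
  have hΛ : ∀ b, (Pi.single i₀ 1 : Fin n → ℤ) b ≠ -1 := by
    intro b
    by_cases hb : b = i₀
    · subst hb; simp
    · simp [hb]
  have hlow : ∀ l η, FPath A (Pi.single i₀ 1) l η → ∀ j, -1 ≤ η j := by
    intro l η h j
    have := hmin η h.mem_orbit j
    omega
  generalize (Pi.single i₀ 1 : Fin n → ℤ) = Λ at *
  let ρ : RingQuot (Rel k Q (Iβ A Λ ξ ℓ)) →ₐ[k] Module.End k (PaV k A Λ ξ ℓ) :=
    RingQuot.liftAlgHom k ⟨faOp k A Λ ξ ℓ, fun _ _ h => faOp_rel k hdiag hsymm hoff hQ h⟩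
  have hρ : ∀ a, ρ (RingQuot.mkAlgHom k _ a) = faOp k A Λ ξ ℓ a := by
    intro a
    simp [ρ]
  refine ⟨ρ, fun μ => by rw [hρ, faOp_e], fun p => by rw [hρ, faOp_x],
    fun j h => by rw [hρ, faOp_t], ?_, ?_, ?_⟩
  · intro ν _ p hp
    rw [hρ, map_mul, map_pow, faOp_x, faOp_e]
    by_cases hν : FPath A Λ (List.ofFn ν) ξ
    · rw [path_last ν hν p hp]; simp
    · rw [e_zero k ν hν, mul_zero]
  · obtain ⟨ν, hν⟩ := hb
    refine ⟨fun _ => 1, fun h => ?_⟩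
    have := congrFun h ⟨ν, hν⟩
    exact one_ne_zero this
  · intro U hU
    have hUe : ∀ μ v, v ∈ U → eOpPa k A Λ ξ ℓ μ v ∈ U := by
      intro μ v hv
      have := hU (RingQuot.mkAlgHom k _ (Eg k μ)) v hv
      rwa [hρ, faOp_e] at this
    have hUt : ∀ j h v, v ∈ U → tOpPa k A Λ ξ ℓ j h v ∈ U := by
      intro j h v hv
      have := hU (RingQuot.mkAlgHom k _ (Tg k j h)) v hv
      rwa [hρ, faOp_t] at this
    exact simple_aux k hdiag hsymm hoff hΛ hlow U hUe hUt

end QHA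
end

section
/- The prescribed operators make Sp(b) a module over the quiver Hecke algebra R(β) of type B_n; the cyclotomic ideal ⟨x_N^{⟨h_{ν_N}, Λ₁⟩} e(ν) : ν ∈ I^β⟩ acts by zero, so Sp(b) is a module over the cyclotomic quiver Hecke algebra R^{Λ₁}(ξ); and Sp(b) is a simple R^{Λ₁}(ξ)-module on which every x_k acts by zero (a homogeneous simple module, concentrated in a single degree of the ℤ-grading). -/
open scoped Classical

namespace QHA

variable (k : Type) [Field k]

/-- The Cartan matrix of type `Bₙ` (0-based labeling; the first node carries the
short simple root: `a_{1,2} = -2`, `a_{2,1} = -1` in 1-based labels, and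
`1 — 2 — ⋯ — n` is a chain). -/
def AB (n : ℕ) : Fin n → Fin n → ℤ := fun i j =>
  if i = j then 2
  else if (i : ℕ) = 0 ∧ (j : ℕ) = 1 then -2
  else if (i : ℕ) + 1 = (j : ℕ) ∨ (j : ℕ) + 1 = (i : ℕ) then -1
  else 0

/-- The symmetrizing integers of type `Bₙ`: `d₁ = 1` and `d_i = 2` for `i ≥ 2`. -/
def dB (n : ℕ) : Fin n → ℤ := fun i => if (i : ℕ) = 0 then 1 else 2

/-- The shifted Young diagram of a strict partition `l = (λ₁ > λ₂ > ⋯)`,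
as the set of (1-based) boxes `(i,j)` with `1 ≤ i ≤ ℓ`, `i ≤ j ≤ λᵢ + i - 1`. -/
def diagram (l : List ℕ) : Set (ℕ × ℕ) :=
  {b | b.1 - 1 < l.length ∧ 1 ≤ b.1 ∧ b.1 ≤ b.2 ∧ b.2 + 1 ≤ l.getD (b.1 - 1) 0 + b.1}

/-- The shifted Young diagram as a finset. -/
def diagFinset (l : List ℕ) : Finset (ℕ × ℕ) :=
  (Finset.range l.length).biUnion fun i =>
    (Finset.Icc (i + 1) (l.getD i 0 + i)).image fun j => (i + 1, j)

/-- The residue `res(i,j) = j - i + 1` of a box. -/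
def resBox (b : ℕ × ℕ) : ℕ := b.2 + 1 - b.1

/-- The residue of a box as an element of `I = Fin n` (`0`-based:
the box `(i,j)` has `0`-based residue `j - i`). -/
def resFin (n : ℕ) (hn : 0 < n) (b : ℕ × ℕ) : Fin n :=
  ⟨min (b.2 - b.1) (n - 1), by omega⟩

/-- `f : Fin N → ℕ × ℕ` is a standard tableau of shifted shape `l`, where `f k` is
the box containing the entry `k+1`. -/
def IsSYT (l : List ℕ) (N : ℕ) (f : Fin N → ℕ × ℕ) : Prop :=
  Function.Injective f ∧ Set.range f = diagram l ∧
    (∀ a b : Fin N, (f a).1 = (f b).1 → (f a).2 < (f b).2 → a < b) ∧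
    (∀ a b : Fin N, (f a).2 = (f b).2 → (f a).1 < (f b).1 → a < b)

/-- The residue sequence `res(T) = (res(b_N), …, res(b₁)) ∈ I^N` of a tableau. -/
def resSeq (n : ℕ) (hn : 0 < n) {N : ℕ} (f : Fin N → ℕ × ℕ) : Fin N → Fin n :=
  fun p => resFin n hn (f p.rev)

/-- The weight `wt(λ) = Λ₁ - Σ_{b ∈ λ} α_{res(b)}`, in fundamental-weight
coordinates, of type `Bₙ`. -/
noncomputable def wtP (n : ℕ) (hn : 0 < n) (l : List ℕ) : Fin n → ℤ :=
  Pi.single ⟨0, hn⟩ 1 - ∑ b ∈ diagFinset l, αcol (AB n) (resFin n hn b)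

/-- Exchanging in `T` the entries occupying positions `j`, `j+1` of the residue
sequence, i.e. the entries `N-j` and `N-j-1`. -/
def swapEnt {N : ℕ} (j : ℕ) (h : j + 1 < N) (f : Fin N → ℕ × ℕ) : Fin N → ℕ × ℕ :=
  f ∘ Equiv.swap (Fin.rev ⟨j, Nat.lt_of_succ_lt h⟩) (Fin.rev ⟨j + 1, h⟩)

section Ops

variable {N : ℕ} (n : ℕ) (hn : 0 < n) (P : (Fin N → ℕ × ℕ) → Prop)

/-- The vector space with basis the tableaux satisfying `P`. -/
abbrev TabV : Type := {f : Fin N → ℕ × ℕ // P f} → k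

/-- The prescribed action of `e(μ)`: projection onto the span of the tableaux
with residue sequence `μ`. -/
noncomputable def eOpTab (μ : Fin N → Fin n) : Module.End k (TabV k P) :=
  LinearMap.pi fun T => if resSeq n hn T.val = μ then LinearMap.proj T else 0

/-- The prescribed action of `τ_j`: `T ↦ s_j T` if `s_j T` still satisfies `P`,
and `0` otherwise. -/
noncomputable def tOpTab (j : ℕ) (h : j + 1 < N) : Module.End k (TabV k P) :=
  LinearMap.pi fun T =>
    if hh : P (swapEnt j h T.val) then
      LinearMap.proj (⟨swapEnt j h T.val, hh⟩ : {f : Fin N → ℕ × ℕ // P f}) else 0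

end Ops

end QHA


namespace QHA

/-- Key facts on a set of boxes used below: it lies in the shifted quadrant and is an order ideal. -/
def Good (n : ℕ) (D : Set (ℕ × ℕ)) : Prop :=
  (∀ b ∈ D, 1 ≤ b.1 ∧ b.1 ≤ b.2 ∧ b.2 < b.1 + n) ∧
  (∀ b ∈ D, ∀ i j : ℕ, 1 ≤ i → i ≤ j → i ≤ b.1 → j ≤ b.2 → (i, j) ∈ D)

/-- Linear extensions of a set of boxes. -/
def LE' (D : Set (ℕ × ℕ)) (N : ℕ) (f : Fin N → ℕ × ℕ) : Prop :=
  Function.Injective f ∧ Set.range f = D ∧ ∀ a b, f a ≤ f b → a ≤ b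

lemma getD_dec (l : List ℕ) (hdec : l.Chain' (· > ·)) (i d : ℕ) (h : i + d < l.length) :
    l.getD (i + d) 0 + d ≤ l.getD i 0 := by
  induction d with
  | zero => simp
  | succ d ih =>
    have h1 := ih (by omega)
    have h2 := (List.isChain_iff_getElem.mp hdec) (i + d) (by omega)
    rw [List.getD_eq_getElem _ _ (by omega)] at h1 ⊢
    have : i + (d + 1) = i + d + 1 := by omega
    simp only [this]
    omega

lemma diagram_good (n : ℕ) (l : List ℕ) (hdec : l.Chain' (· > ·)) (hle : ∀ x ∈ l, x ≤ n) :
    Good n (diagram l) := by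
  constructor
  · rintro ⟨i, j⟩ ⟨h1, h2, h3, h4⟩
    simp only at *
    have : l.getD (i - 1) 0 ≤ n := by
      rw [List.getD_eq_getElem _ _ h1]
      exact hle _ (List.getElem_mem _)
    omega
  · rintro ⟨i', j'⟩ ⟨h1, h2, h3, h4⟩ i j hi hij hii hjj
    simp only at *
    have := getD_dec l hdec (i - 1) (i' - i) (by omega)
    have e : i - 1 + (i' - i) = i' - 1 := by omega
    rw [e] at this
    refine ⟨?_, ?_, ?_, ?_⟩ <;> simp only <;> omega

lemma isSYT_iff {n : ℕ} {l : List ℕ} (hG : Good n (diagram l)) (N : ℕ) (f : Fin N → ℕ × ℕ) :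
    IsSYT l N f ↔ LE' (diagram l) N f := by
  constructor
  · rintro ⟨hi, hr, h1, h2⟩
    refine ⟨hi, hr, fun a b hab => ?_⟩
    have hb : f b ∈ diagram l := hr ▸ Set.mem_range_self b
    have ha : f a ∈ diagram l := hr ▸ Set.mem_range_self a
    have hA := hG.1 _ ha
    have hB := hG.1 _ hb
    have hc : ((f a).1, (f b).2) ∈ diagram l :=
      hG.2 _ hb _ _ hA.1 (hab.1.trans hB.2.1) hab.1 le_rfl
    rw [← hr] at hc
    obtain ⟨c, hc⟩ := hc
    have hc1 : (f c).1 = (f a).1 := by rw [hc]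
    have hc2 : (f c).2 = (f b).2 := by rw [hc]
    have ac : a ≤ c := by
      rcases hab.2.lt_or_eq with h | h
      · exact (h1 a c hc1.symm (by omega)).le
      · exact (hi (Prod.ext hc1.symm (by omega))).le
    have cb : c ≤ b := by
      rcases hab.1.lt_or_eq with h | h
      · exact (h2 c b hc2 (by omega)).le
      · exact (hi (Prod.ext (by omega) hc2)).le
    exact ac.trans cb
  · rintro ⟨hi, hr, h⟩
    refine ⟨hi, hr, fun a b h1 h2 => ?_, fun a b h1 h2 => ?_⟩
    · refine lt_of_le_of_ne (h a b ⟨h1.le, h2.le⟩) ?_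
      rintro rfl; omega
    · refine lt_of_le_of_ne (h a b ⟨h2.le, h1.le⟩) ?_
      rintro rfl; omega

section comb
variable {n N : ℕ} {D : Set (ℕ × ℕ)} {f : Fin N → ℕ × ℕ}

lemma LE'.mem (hf : LE' D N f) (a : Fin N) : f a ∈ D := hf.2.1 ▸ Set.mem_range_self a

lemma LE'.between (hf : LE' D N f) {a b : Fin N} (hab : (b : ℕ) = a + 1) {x : ℕ × ℕ}
    (hx : x ∈ D) (h1 : f a ≤ x) (h2 : x ≤ f b) : x = f a ∨ x = f b := by
  rw [← hf.2.1] at hx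
  obtain ⟨c, rfl⟩ := hx
  have h1 := hf.2.2 _ _ h1
  have h2 := hf.2.2 _ _ h2
  have h1' : (a : ℕ) ≤ c := h1
  have h2' : (c : ℕ) ≤ b := h2
  rcases h1'.lt_or_eq with h | h
  · right; congr 1; ext; omega
  · left; congr 1; ext; omega

/-- consecutive comparable entries are adjacent boxes -/
lemma LE'.adj (hG : Good n D) (hf : LE' D N f) {a b : Fin N} (hab : (b : ℕ) = a + 1)
    (h : f a ≤ f b) :
    f b = ((f a).1, (f a).2 + 1) ∨ f b = ((f a).1 + 1, (f a).2) := by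
  have hA := hG.1 _ (hf.mem a)
  have hB := hG.1 _ (hf.mem b)
  have hne : f a ≠ f b := fun e => by have := hf.1 e; subst this; omega
  have h1 := h.1
  have h2 := h.2
  by_cases h3 : (f a).2 < (f b).2
  · left
    have hx : ((f a).1, (f a).2 + 1) ∈ D := hG.2 _ (hf.mem b) _ _ hA.1 (by omega) h1 h3
    rcases hf.between hab hx ⟨le_rfl, by simp⟩ ⟨h1, h3⟩ with e | e
    · have := congrArg Prod.snd e; simp at this
    · exact e.symm
  · right
    have h4 : (f a).1 < (f b).1 := by
      rcases h1.lt_or_eq with h | h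
      · exact h
      · exact absurd (Prod.ext h (by omega)) hne
    have hx : ((f a).1 + 1, (f a).2) ∈ D := hG.2 _ (hf.mem b) _ _ (by omega) (by omega) h4 h2
    rcases hf.between hab hx ⟨by simp, le_rfl⟩ ⟨h4, h2⟩ with e | e
    · have := congrArg Prod.fst e; simp at this
    · exact e.symm

/-- consecutive incomparable entries have far residues -/
lemma LE'.far (hG : Good n D) (hf : LE' D N f) {a b : Fin N} (hab : (b : ℕ) = a + 1)
    (h : ¬ f a ≤ f b) :
    (f a).2 - (f a).1 + 2 ≤ (f b).2 - (f b).1 ∨ (f b).2 - (f b).1 + 2 ≤ (f a).2 - (f a).1 := by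
  have hA := hG.1 _ (hf.mem a)
  have hB := hG.1 _ (hf.mem b)
  have h' : ¬ f b ≤ f a := fun e => by
    have h5 : (b : ℕ) ≤ a := hf.2.2 _ _ e
    omega
  rw [Prod.le_def] at h h'
  omega

lemma LE'.swap_iff (hf : LE' D N f) {a b : Fin N} (hab : (b : ℕ) = a + 1) :
    LE' D N (f ∘ Equiv.swap b a) ↔ ¬ f a ≤ f b := by
  constructor
  · intro h e
    have := h.2.2 b a (by simpa using e)
    have : (b : ℕ) ≤ a := this
    omega
  · intro h
    refine ⟨hf.1.comp (Equiv.injective _), ?_, ?_⟩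
    · rw [Set.range_comp]; simp [hf.2.1]
    · intro c d hcd
      have h2 := hf.2.2 _ _ hcd
      by_contra hlt
      have hlt : (d : ℕ) < c := not_le.mp hlt
      have hne : ¬ f b ≤ f a := fun e => by
        have h5 : (b : ℕ) ≤ a := hf.2.2 _ _ e
        omega
      have h2 : ((Equiv.swap b a c : Fin N) : ℕ) ≤ (Equiv.swap b a d : Fin N) := h2
      simp only [Function.comp] at hcd
      by_cases c1 : c = a
      · subst c1
        by_cases d1 : d = b
        · subst d1; omega
        · have : d ≠ c := fun e => by subst e; omega
          rw [Equiv.swap_apply_right, Equiv.swap_apply_of_ne_of_ne d1 this] at h2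
          omega
      · by_cases c2 : c = b
        · subst c2
          by_cases d1 : d = a
          · subst d1
            simp at hcd
            exact h hcd
          · have d2 : d ≠ c := fun e => by subst e; omega
            rw [Equiv.swap_apply_left, Equiv.swap_apply_of_ne_of_ne d2 d1] at h2
            have : (d : ℕ) ≠ a := fun e => d1 (Fin.ext e)
            omega
        · rw [Equiv.swap_apply_of_ne_of_ne c2 c1] at h2
          have k1 : (c : ℕ) ≠ a := fun e => c1 (Fin.ext e)
          have k2 : (c : ℕ) ≠ b := fun e => c2 (Fin.ext e)
          by_cases d1 : d = a
          · subst d1; rw [Equiv.swap_apply_right] at h2; omega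
          · by_cases d2 : d = b
            · subst d2; rw [Equiv.swap_apply_left] at h2; omega
            · rw [Equiv.swap_apply_of_ne_of_ne d2 d1] at h2; omega

lemma LE'.swapEnt_iff (hf : LE' D N f) (j : ℕ) (h : j + 1 < N) :
    LE' D N (swapEnt j h f) ↔
      ¬ f (Fin.rev ⟨j + 1, h⟩) ≤ f (Fin.rev ⟨j, Nat.lt_of_succ_lt h⟩) :=
  hf.swap_iff (by simp [Fin.val_rev]; omega)

lemma resFin_val {hn : 0 < n} (hG : Good n D) {b : ℕ × ℕ} (hb : b ∈ D) :
    (resFin n hn b : ℕ) = b.2 - b.1 := by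
  have := hG.1 _ hb
  simp only [resFin]; omega

/-- the residue pattern `i m i` with `|i - m| = 1` forces `i = 0`, `m = 1`. -/
lemma LE'.pattern (hG : Good n D) (hf : LE' D N f) {a b c : Fin N} (hab : (b : ℕ) = a + 1)
    (hbc : (c : ℕ) = b + 1) (h1 : f a ≤ f b) (h2 : f b ≤ f c)
    (hr : (f a).2 - (f a).1 = (f c).2 - (f c).1) :
    (f a).2 - (f a).1 = 0 ∧ (f b).2 - (f b).1 = 1 := by
  have hA := hG.1 _ (hf.mem a)
  have hB := hG.1 _ (hf.mem b)
  have hC := hG.1 _ (hf.mem c)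
  -- any box between `f a` and `f c` is one of the three
  have btw : ∀ x ∈ D, f a ≤ x → x ≤ f c → x = f a ∨ x = f b ∨ x = f c := by
    intro x hx h1 h2
    rw [← hf.2.1] at hx
    obtain ⟨d, rfl⟩ := hx
    have h1' : (a : ℕ) ≤ d := hf.2.2 _ _ h1
    have h2' : (d : ℕ) ≤ c := hf.2.2 _ _ h2
    have : (d : ℕ) = a ∨ (d : ℕ) = b ∨ (d : ℕ) = c := by omega
    rcases this with e | e | e
    · left; congr 1; exact Fin.ext e
    · right; left; congr 1; exact Fin.ext e
    · right; right; congr 1; exact Fin.ext e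
  rcases hf.adj hG hab h1 with e1 | e1 <;> rcases hf.adj hG hbc h2 with e2 | e2
  · rw [e2, e1] at hr; simp only at hr; omega
  · by_cases h0 : (f a).2 = (f a).1
    · rw [e1]; simp only; omega
    · exfalso
      have hx : ((f a).1 + 1, (f a).2) ∈ D :=
        hG.2 _ (hf.mem c) _ _ (by omega) (by omega) (by rw [e2, e1]) (by rw [e2, e1]; simp)
      rcases btw _ hx ⟨by simp, le_rfl⟩ (by rw [e2, e1]; exact ⟨le_rfl, by simp⟩) with e | e | e
      · have := congrArg Prod.fst e; simp at this
      · rw [e1] at e; have := congrArg Prod.fst e; simp at this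
      · rw [e2, e1] at e; have := congrArg Prod.snd e; simp at this
  · exfalso
    have hx : ((f a).1, (f a).2 + 1) ∈ D :=
      hG.2 _ (hf.mem c) _ _ (by omega) (by omega) (by rw [e2, e1]; simp) (by rw [e2, e1])
    rcases btw _ hx ⟨le_rfl, by simp⟩ (by rw [e2, e1]; exact ⟨by simp, le_rfl⟩) with e | e | e
    · have := congrArg Prod.snd e; simp at this
    · rw [e1] at e; have := congrArg Prod.fst e; simp at this
    · rw [e2, e1] at e; have := congrArg Prod.fst e; simp at this
  · rw [e2, e1] at hr; simp only at hr
    rw [e2, e1] at hC; simp only at hC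
    omega

lemma LE'.first (hG : Good n D) (hf : LE' D N f) {a : Fin N} (ha : (a : ℕ) = 0) :
    (f a).2 - (f a).1 = 0 := by
  have hA := hG.1 _ (hf.mem a)
  by_contra h0
  have hx : ((f a).1, (f a).1) ∈ D :=
    hG.2 _ (hf.mem a) _ _ (by omega) (by omega) le_rfl (by omega)
  rw [← hf.2.1] at hx
  obtain ⟨c, hc⟩ := hx
  have : c ≤ a := hf.2.2 _ _ (by rw [hc]; exact ⟨le_rfl, hA.2.1⟩)
  have : c = a := by
    apply Fin.ext
    have : (c : ℕ) ≤ a := this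
    omega
  subst this
  have := congrArg Prod.snd hc
  simp only at this
  omega

/-- The residues determine the tableau. -/
lemma LE'.res_inj (hG : Good n D) {g : Fin N → ℕ × ℕ} (hf : LE' D N f) (hg : LE' D N g)
    (h : ∀ a, (f a).2 - (f a).1 = (g a).2 - (g a).1) : f = g := by
  have key : ∀ m : ℕ, ∀ a : Fin N, (a : ℕ) = m → f a = g a := by
    intro m
    induction m using Nat.strong_induction_on with
    | _ m ih =>
      intro a ha
      have hA := hG.1 _ (hf.mem a)
      have hB := hG.1 _ (hg.mem a)
      have hr := h a
      by_contra hne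
      have : f a ≤ g a ∨ g a ≤ f a := by
        rw [Prod.le_def, Prod.le_def]; omega
      rcases this with hle | hle
      · have hx := hf.mem a
        rw [← hg.2.1] at hx
        obtain ⟨c, hc⟩ := hx
        have hca : c ≤ a := hg.2.2 _ _ (hc ▸ hle)
        have : c ≠ a := fun e => hne (by rw [← hc, e])
        have hlt : (c : ℕ) < a := Fin.lt_def.mp (lt_of_le_of_ne hca this)
        have := ih c (by omega) c rfl
        exact (ne_of_lt hlt) (congrArg Fin.val (hf.1 (this.trans hc)))
      · have hx := hg.mem a
        rw [← hf.2.1] at hx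
        obtain ⟨c, hc⟩ := hx
        have hca : c ≤ a := hf.2.2 _ _ (hc ▸ hle)
        have : c ≠ a := fun e => hne (by rw [← hc, e])
        have hlt : (c : ℕ) < a := Fin.lt_def.mp (lt_of_le_of_ne hca this)
        have := ih c (by omega) c rfl
        exact (ne_of_lt hlt) (congrArg Fin.val (hg.1 (this.symm.trans hc)))
  funext a
  exact key _ a rfl

/-- Connectivity of linear extensions under admissible adjacent swaps. -/
lemma LE'.connected {g : Fin N → ℕ × ℕ} (hf : LE' D N f) (hg : LE' D N g)
    (S : (Fin N → ℕ × ℕ) → Prop) (hS : S f)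
    (hstep : ∀ q, LE' D N q → S q → ∀ (j : ℕ) (h : j + 1 < N),
      LE' D N (swapEnt j h q) → S (swapEnt j h q)) : S g := by
  -- the entry of a box in `g`
  let r : ℕ × ℕ → ℕ := Function.extend g (fun a => (a : ℕ)) 0
  have hr : ∀ a, r (g a) = a := fun a => hg.1.extend_apply _ _ a
  have hrN : ∀ q, LE' D N q → ∀ a, ∃ c : Fin N, g c = q a ∧ r (q a) = c := by
    intro q hq a
    have := hq.mem a
    rw [← hg.2.1] at this
    obtain ⟨c, hc⟩ := this
    exact ⟨c, hc, by rw [← hc, hr]⟩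
  let M : (Fin N → ℕ × ℕ) → ℕ := fun q => ∑ a : Fin N, (a : ℕ) * r (q a)
  have hM : ∀ q, LE' D N q → M q ≤ N * (N * N) := by
    intro q hq
    calc M q ≤ ∑ a : Fin N, N * N := by
          refine Finset.sum_le_sum fun a _ => Nat.mul_le_mul a.2.le ?_
          obtain ⟨c, _, hc⟩ := hrN q hq a
          rw [hc]; exact c.2.le
      _ = _ := by simp
  have main : ∀ d : ℕ, ∀ q, LE' D N q → S q → N * (N * N) - M q = d → S g := by
    intro d
    induction d using Nat.strong_induction_on with
    | _ d ih =>
      intro q hq hSq hd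
      by_cases hdes : ∃ a b : Fin N, (b : ℕ) = a + 1 ∧ r (q b) < r (q a)
      · obtain ⟨a, b, hab, hlt⟩ := hdes
        have hN : (N - 1 - (b : ℕ)) + 1 < N := by have := b.2; omega
        have e1 : Fin.rev ⟨N - 1 - (b : ℕ), Nat.lt_of_succ_lt hN⟩ = b := by
          ext; simp [Fin.val_rev]; have := b.2; omega
        have e2 : Fin.rev ⟨N - 1 - (b : ℕ) + 1, hN⟩ = a := by
          ext; simp [Fin.val_rev]; have := b.2; omega
        have hinc : ¬ q a ≤ q b := by
          intro e
          obtain ⟨c, hc, hc'⟩ := hrN q hq a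
          obtain ⟨c2, hd, hd'⟩ := hrN q hq b
          have : (c : ℕ) ≤ c2 := hg.2.2 c c2 (by rw [hc, hd]; exact e)
          omega
        have hP : LE' D N (swapEnt (N - 1 - (b : ℕ)) hN q) := by
          rw [hq.swapEnt_iff, e1, e2]; exact hinc
        have hM2 : M q < M (swapEnt (N - 1 - (b : ℕ)) hN q) := by
          have hne : a ≠ b := fun e => by subst e; omega
          simp only [M, swapEnt, e1, e2]
          rw [← Finset.add_sum_erase _ _ (Finset.mem_univ a),
            ← Finset.add_sum_erase _ _ (Finset.mem_erase.mpr ⟨hne.symm, Finset.mem_univ b⟩)]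
          rw [← Finset.add_sum_erase Finset.univ (fun x : Fin N => (x : ℕ) *
              r ((q ∘ Equiv.swap b a) x)) (Finset.mem_univ a),
            ← Finset.add_sum_erase _ _ (Finset.mem_erase.mpr ⟨hne.symm, Finset.mem_univ b⟩)]
          have : ∑ x ∈ (Finset.univ.erase a).erase b, (x : ℕ) * r ((q ∘ Equiv.swap b a) x) =
              ∑ x ∈ (Finset.univ.erase a).erase b, (x : ℕ) * r (q x) := by
            refine Finset.sum_congr rfl fun x hx => ?_
            simp only [Finset.mem_erase] at hx
            simp only [Function.comp]
            rw [Equiv.swap_apply_of_ne_of_ne hx.1 hx.2.1]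
          rw [this]
          simp only [Function.comp, Equiv.swap_apply_left, Equiv.swap_apply_right, hab]
          nlinarith
        have := hM _ hP
        exact ih _ (by omega) _ hP (hstep q hq hSq _ _ hP) rfl
      · push Not at hdes
        -- no descents: q = g
        have hmono : ∀ d : ℕ, ∀ a b : Fin N, (b : ℕ) = a + d → r (q a) ≤ r (q b) := by
          intro d
          induction d with
          | zero => intro a b e; have : a = b := Fin.ext (by omega); rw [this]
          | succ d ihd =>
            intro a b e
            have h1 := ihd a ⟨a + d, by omega⟩ rfl
            exact h1.trans (hdes _ b (by simp; omega))
        choose σ hσ hσ' using hrN q hq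
        have hinj : Function.Injective σ := fun a b e => hq.1 (by rw [← hσ, ← hσ, e])
        have hsm : StrictMono σ := by
          refine Monotone.strictMono_of_injective ?_ hinj
          intro a b hab
          have hab : (a : ℕ) ≤ b := hab
          have := hmono (b - a) a b (by omega)
          rw [hσ', hσ'] at this
          exact this
        have hid : ∀ a, σ a = a := by
          intro a
          have := hsm.range_inj (g := id) strictMono_id
          have h2 : σ = id := this.mp (by
            rw [Set.range_id, (Finite.injective_iff_surjective.mp hinj).range_eq])
          rw [h2]; rfl
        have : q = g := by
          funext a; rw [← hσ a, hid]
        rw [← this]; exact hSq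
  exact main _ f hf hS rfl

end comb

lemma mem_diagFinset (l : List ℕ) (b : ℕ × ℕ) : b ∈ diagFinset l ↔ b ∈ diagram l := by
  obtain ⟨i, j⟩ := b
  simp only [diagFinset, diagram, Finset.mem_biUnion, Finset.mem_range, Finset.mem_image,
    Finset.mem_Icc, Set.mem_ofPred_eq, Prod.mk.injEq]
  constructor
  · rintro ⟨i', h1, j', h2, rfl, rfl⟩
    simp only [Nat.add_sub_cancel]
    omega
  · rintro ⟨h1, h2, h3, h4⟩
    refine ⟨i - 1, h1, j, ⟨by omega, by omega⟩, by omega, rfl⟩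

lemma card_diagFinset (l : List ℕ) : (diagFinset l).card = l.sum := by
  rw [diagFinset, Finset.card_biUnion]
  · rw [Finset.sum_congr rfl (g := fun i => l.getD i 0)]
    · rw [← Fin.sum_univ_eq_sum_range (fun i => l.getD i 0)]
      simp [Fin.sum_univ_getElem]
    · intro i _
      rw [Finset.card_image_of_injective _ (fun a b e => (Prod.mk.inj e).2)]
      simp
  · intro i _ i' _ hne
    simp only [Function.onFun]
    rw [Finset.disjoint_left]
    rintro b hb hb'
    simp only [Finset.mem_image] at hb hb'
    obtain ⟨_, _, rfl⟩ := hb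
    obtain ⟨_, _, e⟩ := hb'
    have := congrArg Prod.fst e
    simp at this; omega

lemma exists_LE' (l : List ℕ) : ∃ f, LE' (diagram l) l.sum f := by
  let F : Finset (ℕ ×ₗ ℕ) := (diagFinset l).map toLex.toEmbedding
  have hF : F.card = l.sum := by rw [Finset.card_map, card_diagFinset]
  let φ := F.orderEmbOfFin hF
  refine ⟨fun a => ofLex (φ a), fun a b e => φ.injective (ofLex.injective e), ?_, ?_⟩
  · ext b
    rw [← mem_diagFinset]
    have : Set.range φ = F := Finset.range_orderEmbOfFin F hF
    have h2 : toLex b ∈ Set.range φ ↔ b ∈ diagFinset l := by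
      rw [this]; simp [F]
    rw [← h2]
    simp only [Set.mem_range]
    exact ⟨fun ⟨a, h⟩ => ⟨a, by rw [← h]; rfl⟩, fun ⟨a, h⟩ => ⟨a, by rw [h]; rfl⟩⟩
  · intro a b hab
    have : φ a ≤ φ b := Prod.Lex.toLex_mono hab
    exact φ.le_iff_le.mp this

end QHA

namespace QHA

section poly
variable (k : Type) [Field k]

lemma eval2_map {A B : Type} [Ring A] [Algebra k A] [Ring B] [Algebra k B] (φ : A →ₐ[k] B)
    (p : MvPolynomial (Fin 2) k) (a b : A) :
    φ (eval2 k p a b) = eval2 k p (φ a) (φ b) := by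
  simp [eval2, map_sum, map_mul, map_pow]

lemma eval3_map {A B : Type} [Ring A] [Algebra k A] [Ring B] [Algebra k B] (φ : A →ₐ[k] B)
    (p : MvPolynomial (Fin 3) k) (a b c : A) :
    φ (eval3 k p a b c) = eval3 k p (φ a) (φ b) (φ c) := by
  simp [eval3, map_sum, map_mul, map_pow]

lemma eval2_zero {A : Type} [Ring A] [Algebra k A] (p : MvPolynomial (Fin 2) k) :
    eval2 k p (0 : A) 0 = algebraMap k A (MvPolynomial.coeff 0 p) := by
  rw [eval2, Finset.sum_eq_single 0]
  · simp
  · intro d _ hd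
    have : d 0 ≠ 0 ∨ d 1 ≠ 0 := by
      by_contra h
      push Not at h
      apply hd
      ext i
      fin_cases i
      · exact h.1
      · exact h.2
    rcases this with h | h <;> simp [h]
  · intro h
    simp [MvPolynomial.notMem_support_iff.mp h]

lemma eval3_zero {A : Type} [Ring A] [Algebra k A] (p : MvPolynomial (Fin 3) k) :
    eval3 k p (0 : A) 0 0 = algebraMap k A (MvPolynomial.coeff 0 p) := by
  rw [eval3, Finset.sum_eq_single 0]
  · simp
  · intro d _ hd
    have : d 0 ≠ 0 ∨ d 1 ≠ 0 ∨ d 2 ≠ 0 := by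
      by_contra h
      push Not at h
      apply hd
      ext i
      fin_cases i
      · exact h.1
      · exact h.2.1
      · exact h.2.2
    rcases this with h | h | h <;> simp [h]
  · intro h
    simp [MvPolynomial.notMem_support_iff.mp h]

lemma Qbar_one : Qbar k 1 = 0 := by
  simp [Qbar]

open MvPolynomial in
lemma Qbar_short (a b : k) : coeff 0 (Qbar k (C a * X 0 ^ 2 + C b * X 1)) = 0 := by
  have : Qbar k (C a * X 0 ^ 2 + C b * X 1) = C a * (X 0 + X 2) := by
    rw [Qbar]
    apply (finSuccEquiv k 2).injective
    rw [AlgEquiv.apply_symm_apply]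
    have h : (finSuccEquiv k 2)
        (rename (fun i : Fin 2 => if i = 0 then (0 : Fin 3) else 1) (C a * X 0 ^ 2 + C b * X 1) -
          rename (fun i : Fin 2 => if i = 0 then (2 : Fin 3) else 1) (C a * X 0 ^ 2 + C b * X 1))
        = (Polynomial.X - Polynomial.C (X 1)) * finSuccEquiv k 2 (C a * (X 0 + X 2)) := by
      have h2 : finSuccEquiv k 2 (X 2) = Polynomial.C (X 1) := finSuccEquiv_X_succ (j := 1)
      simp only [map_sub, map_add, map_mul, map_pow, rename_C, rename_X, finSuccEquiv_X_zero, h2,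
        if_true, one_ne_zero, if_false]
      ring
    rw [h]
    exact Polynomial.mul_divByMonic_cancel_left _ (Polynomial.monic_X_sub_C _)
  rw [this, ← MvPolynomial.constantCoeff_eq]
  simp

variable {n : ℕ} {Q : Fin n → Fin n → MvPolynomial (Fin 2) k}

lemma Q_far (hQ : QAdmissible k (AB n) (dB n) Q) (i j : Fin n)
    (h : (i : ℕ) + 2 ≤ j ∨ (j : ℕ) + 2 ≤ i) : Q i j = 1 := by
  have hne : i ≠ j := fun e => by subst e; omega
  apply hQ.2.2.1 i j hne
  simp only [AB, hne, if_false]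
  rw [if_neg (by omega), if_neg (by omega), mul_zero]

lemma Q_adj (hQ : QAdmissible k (AB n) (dB n) Q) (i j : Fin n)
    (h : (i : ℕ) + 1 = j ∨ (j : ℕ) + 1 = i) : MvPolynomial.coeff 0 (Q i j) = 0 := by
  have hne : i ≠ j := fun e => by subst e; omega
  by_contra hc
  have := hQ.2.2.2.1 i j hne 0 (MvPolynomial.mem_support_iff.mpr hc)
  simp only [AB, dB, hne, if_false, Finsupp.coe_zero, Pi.zero_apply] at this
  split_ifs at this <;> simp at this

lemma Q_short (hQ : QAdmissible k (AB n) (dB n) Q) (i j : Fin n)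
    (hi : (i : ℕ) = 0) (hj : (j : ℕ) = 1) : MvPolynomial.coeff 0 (Qbar k (Q i j)) = 0 := by
  have hne : i ≠ j := fun e => by subst e; omega
  have hs := hQ.2.2.2.1 i j hne
  simp only [AB, dB, hne, if_false, hi, hj] at hs
  have : Q i j = MvPolynomial.C (MvPolynomial.coeff (Finsupp.single 0 2) (Q i j)) *
        MvPolynomial.X 0 ^ 2 +
      MvPolynomial.C (MvPolynomial.coeff (Finsupp.single 1 1) (Q i j)) * MvPolynomial.X 1 := by
    rw [MvPolynomial.X_pow_eq_monomial, MvPolynomial.X, MvPolynomial.C_mul_monomial,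
      MvPolynomial.C_mul_monomial]
    ext d
    simp only [MvPolynomial.coeff_add, MvPolynomial.coeff_monomial, mul_one]
    by_cases h1 : Finsupp.single 0 2 = d
    · rw [if_pos h1, if_neg, h1, add_zero]
      intro e
      rw [← h1] at e
      have := DFunLike.congr_fun e 0
      simp at this
    · by_cases h2 : Finsupp.single 1 1 = d
      · rw [if_neg h1, if_pos h2, h2, zero_add]
      · rw [if_neg h1, if_neg h2, zero_add]
        by_contra hc
        have := hs d (MvPolynomial.mem_support_iff.mpr hc)
        simp at this
        have h3 : (d 0 = 2 ∧ d 1 = 0) ∨ (d 0 = 0 ∧ d 1 = 1) := by omega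
        rcases h3 with h3 | h3
        · apply h1; ext t; fin_cases t <;> simp [h3]
        · apply h2; ext t; fin_cases t <;> simp [h3]
  rw [this]
  exact Qbar_short k _ _

end poly

section ops
variable (k : Type) [Field k] {N : ℕ} {P : (Fin N → ℕ × ℕ) → Prop}

/-- extension by zero of a vector to all fillings -/
noncomputable def hat (v : TabV k P) (f : Fin N → ℕ × ℕ) : k := if h : P f then v ⟨f, h⟩ else 0

lemma hat_pos (v : TabV k P) {f} (h : P f) : hat k v f = v ⟨f, h⟩ := dif_pos h
lemma hat_neg (v : TabV k P) {f} (h : ¬ P f) : hat k v f = 0 := dif_neg h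

lemma hat_ext {v w : TabV k P} (h : ∀ f, P f → hat k v f = hat k w f) : v = w := by
  funext T
  have := h T.1 T.2
  rwa [hat_pos k v T.2, hat_pos k w T.2] at this

lemma hat_add (v w : TabV k P) (f) : hat k (v + w) f = hat k v f + hat k w f := by
  by_cases h : P f <;> simp [hat, h]
lemma hat_smul (c : k) (v : TabV k P) (f) : hat k (c • v) f = c * hat k v f := by
  by_cases h : P f <;> simp [hat, h]
lemma hat_zero (f) : hat k (0 : TabV k P) f = 0 := by
  by_cases h : P f <;> simp [hat, h]

lemma hat_t (j : ℕ) (h : j + 1 < N) (v : TabV k P) (f) :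
    hat k (tOpTab k P j h v) f = if P f then hat k v (swapEnt j h f) else 0 := by
  by_cases hf : P f
  · rw [hat_pos _ _ hf, if_pos hf]
    simp only [tOpTab, LinearMap.pi_apply, hat]
    split_ifs <;> rfl
  · rw [hat_neg _ _ hf, if_neg hf]

lemma hat_e (n : ℕ) (hn : 0 < n) (μ : Fin N → Fin n) (v : TabV k P) (f) :
    hat k (eOpTab k n hn P μ v) f = if resSeq n hn f = μ then hat k v f else 0 := by
  by_cases hf : P f
  · rw [hat_pos _ _ hf, hat_pos _ _ hf]
    simp only [eOpTab, LinearMap.pi_apply]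
    split_ifs <;> rfl
  · rw [hat_neg _ _ hf, hat_neg _ _ hf]; simp

lemma swapEnt_swapEnt (j : ℕ) (h : j + 1 < N) (f : Fin N → ℕ × ℕ) :
    swapEnt j h (swapEnt j h f) = f := by
  funext a; simp [swapEnt]

lemma rev_swap {N : ℕ} (a b p : Fin N) :
    Equiv.swap (Fin.rev a) (Fin.rev b) (Fin.rev p) = Fin.rev (Equiv.swap a b p) :=
  (Fin.rev_injective.map_swap a b p).symm

lemma posSwap_val (j : ℕ) (h : j + 1 < N) (p : Fin N) :
    (posSwap j h p : ℕ) = if (p : ℕ) = j then j + 1 else if (p : ℕ) = j + 1 then j else p := by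
  simp only [posSwap, Equiv.swap_apply_def, Fin.ext_iff]
  split_ifs <;> rfl

lemma swapEnt_rev (j : ℕ) (h : j + 1 < N) (f : Fin N → ℕ × ℕ) (p : Fin N) :
    swapEnt j h f (Fin.rev p) = f (Fin.rev (posSwap j h p)) := by
  simp only [swapEnt, posSwap, Function.comp, rev_swap]

lemma resSeq_swapEnt (n : ℕ) (hn : 0 < n) (j : ℕ) (h : j + 1 < N) (f : Fin N → ℕ × ℕ) :
    resSeq n hn (swapEnt j h f) = swapSeq j h (resSeq n hn f) := by
  funext p
  simp only [resSeq, swapSeq, Function.comp, swapEnt_rev]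

lemma swapEnt_comm (a : ℕ) (ha : a + 1 < N) (b : ℕ) (hb : b + 1 < N)
    (hab : a + 1 < b ∨ b + 1 < a) (f : Fin N → ℕ × ℕ) :
    swapEnt a ha (swapEnt b hb f) = swapEnt b hb (swapEnt a ha f) := by
  have key : ∀ p, swapEnt a ha (swapEnt b hb f) (Fin.rev p) =
      swapEnt b hb (swapEnt a ha f) (Fin.rev p) := by
    intro p
    simp only [swapEnt_rev]
    congr 2
    apply Fin.ext
    simp only [posSwap_val]
    split_ifs <;> omega
  funext p
  simpa using key (Fin.rev p)

lemma swapEnt_braid (j : ℕ) (h1 : j + 1 < N) (h2 : j + 1 + 1 < N) (f : Fin N → ℕ × ℕ) :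
    swapEnt (j + 1) h2 (swapEnt j h1 (swapEnt (j + 1) h2 f)) =
      swapEnt j h1 (swapEnt (j + 1) h2 (swapEnt j h1 f)) := by
  have key : ∀ p, swapEnt (j + 1) h2 (swapEnt j h1 (swapEnt (j + 1) h2 f)) (Fin.rev p) =
      swapEnt j h1 (swapEnt (j + 1) h2 (swapEnt j h1 f)) (Fin.rev p) := by
    intro p
    simp only [swapEnt_rev]
    congr 2
    apply Fin.ext
    simp only [posSwap_val]
    split_ifs <;> omega
  funext p
  simpa using key (Fin.rev p)

/-- The action of the free algebra. -/
noncomputable def rho0 (n : ℕ) (hn : 0 < n) (P : (Fin N → ℕ × ℕ) → Prop) :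
    FA k n N →ₐ[k] Module.End k (TabV k P) :=
  FreeAlgebra.lift k fun g => match g with
    | Gen.e ν => eOpTab k n hn P ν
    | Gen.x _ => 0
    | Gen.t j h => tOpTab k P j h

variable (n : ℕ) (hn : 0 < n)

lemma rho0_e (ν : Fin N → Fin n) : rho0 k n hn P (Eg k ν) = eOpTab k n hn P ν := by
  simp [rho0, Eg]
lemma rho0_x (p : Fin N) : rho0 k n hn P (Xg k p) = 0 := by
  simp [rho0, Xg]
lemma rho0_t (j : ℕ) (h : j + 1 < N) : rho0 k n hn P (Tg k j h) = tOpTab k P j h := by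
  simp [rho0, Tg]

variable {n} {D : Set (ℕ × ℕ)} {Q : Fin n → Fin n → MvPolynomial (Fin 2) k}

lemma swap_P (hP : ∀ f, P f ↔ LE' D N f) {f} (hf : P f) (j : ℕ) (h : j + 1 < N) :
    P (swapEnt j h f) ↔ ¬ f (Fin.rev ⟨j + 1, h⟩) ≤ f (Fin.rev ⟨j, Nat.lt_of_succ_lt h⟩) := by
  rw [hP]; exact ((hP f).mp hf).swapEnt_iff j h

/-- Residues of neighbouring positions. -/
lemma res_nbr (hG : Good n D) (hP : ∀ f, P f ↔ LE' D N f) {f} (hf : P f) (j : ℕ)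
    (h : j + 1 < N) :
    (P (swapEnt j h f) ∧
      ((resSeq n hn f ⟨j, Nat.lt_of_succ_lt h⟩ : ℕ) + 2 ≤ resSeq n hn f ⟨j + 1, h⟩ ∨
      (resSeq n hn f ⟨j + 1, h⟩ : ℕ) + 2 ≤ resSeq n hn f ⟨j, Nat.lt_of_succ_lt h⟩)) ∨
    (¬ P (swapEnt j h f) ∧
      ((resSeq n hn f ⟨j, Nat.lt_of_succ_lt h⟩ : ℕ) + 1 = resSeq n hn f ⟨j + 1, h⟩ ∨
      (resSeq n hn f ⟨j + 1, h⟩ : ℕ) + 1 = resSeq n hn f ⟨j, Nat.lt_of_succ_lt h⟩)) := by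
  have hL := (hP f).mp hf
  have hab : ((Fin.rev ⟨j, Nat.lt_of_succ_lt h⟩ : Fin N) : ℕ) = (Fin.rev ⟨j + 1, h⟩ : Fin N) + 1 := by
    simp [Fin.val_rev]; omega
  rw [swap_P hP hf]
  simp only [resSeq, resFin_val hG (hL.mem _)]
  by_cases hc : f (Fin.rev ⟨j + 1, h⟩) ≤ f (Fin.rev ⟨j, Nat.lt_of_succ_lt h⟩)
  · right
    refine ⟨not_not.mpr hc, ?_⟩
    have hA := hG.1 _ (hL.mem (Fin.rev ⟨j + 1, h⟩))
    have hB := hG.1 _ (hL.mem (Fin.rev ⟨j, Nat.lt_of_succ_lt h⟩))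
    rcases hL.adj hG hab hc with e | e <;>
    · rw [e] at hB ⊢; simp only at hB ⊢; omega
  · left
    refine ⟨hc, ?_⟩
    have := hL.far hG hab hc
    omega

lemma braid_op (hP : ∀ f, P f ↔ LE' D N f) (j : ℕ) (h1 : j + 1 < N) (h2 : j + 1 + 1 < N) :
    tOpTab k P (j + 1) h2 * tOpTab k P j h1 * tOpTab k P (j + 1) h2 =
      tOpTab k P j h1 * tOpTab k P (j + 1) h2 * tOpTab k P j h1 := by
  refine LinearMap.ext fun v => hat_ext k fun f hf => ?_
  simp only [Module.End.mul_apply, hat_t, hf, if_true]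
  have s0 : ∀ (q : Fin N → ℕ × ℕ), swapEnt j h1 q (Fin.rev ⟨j, by omega⟩) =
      q (Fin.rev ⟨j + 1, h1⟩) := fun q => by rw [swapEnt_rev, posSwap, Equiv.swap_apply_left]
  have s1 : ∀ (q : Fin N → ℕ × ℕ), swapEnt j h1 q (Fin.rev ⟨j + 1, h1⟩) =
      q (Fin.rev ⟨j, by omega⟩) := fun q => by rw [swapEnt_rev, posSwap, Equiv.swap_apply_right]
  have s2 : ∀ (q : Fin N → ℕ × ℕ), swapEnt j h1 q (Fin.rev ⟨j + 1 + 1, h2⟩) =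
      q (Fin.rev ⟨j + 1 + 1, h2⟩) := fun q => by
    rw [swapEnt_rev, posSwap, Equiv.swap_apply_of_ne_of_ne] <;> simp [Fin.ext_iff]; omega
  have t0 : ∀ (q : Fin N → ℕ × ℕ), swapEnt (j + 1) h2 q (Fin.rev ⟨j, by omega⟩) =
      q (Fin.rev ⟨j, by omega⟩) := fun q => by
    rw [swapEnt_rev, posSwap, Equiv.swap_apply_of_ne_of_ne] <;> simp [Fin.ext_iff]; omega
  have t1 : ∀ (q : Fin N → ℕ × ℕ), swapEnt (j + 1) h2 q (Fin.rev ⟨j + 1, h1⟩) =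
      q (Fin.rev ⟨j + 1 + 1, h2⟩) := fun q => by rw [swapEnt_rev, posSwap, Equiv.swap_apply_left]
  have t2 : ∀ (q : Fin N → ℕ × ℕ), swapEnt (j + 1) h2 q (Fin.rev ⟨j + 1 + 1, h2⟩) =
      q (Fin.rev ⟨j + 1, h1⟩) := fun q => by rw [swapEnt_rev, posSwap, Equiv.swap_apply_right]
  -- the three incomparability conditions
  have A1 := swap_P hP hf (j + 1) h2
  have B1 := swap_P hP hf j h1
  rw [← swapEnt_braid]
  by_cases a1 : P (swapEnt (j + 1) h2 f) <;> by_cases b1 : P (swapEnt j h1 f)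
  · have A2 := swap_P hP a1 j h1
    have B2 := swap_P hP b1 (j + 1) h2
    rw [t0, t1] at A2
    rw [s1, s2] at B2
    rw [if_pos a1, if_pos b1]
    by_cases h3 : P (swapEnt j h1 (swapEnt (j + 1) h2 f))
    · rw [if_pos h3, if_pos (B2.mpr (A2.mp h3))]
    · rw [if_neg h3, if_neg (fun e => h3 (A2.mpr (B2.mp e)))]
  · rw [if_pos a1, if_neg b1]
    split_ifs with h3
    · apply hat_neg
      rw [swap_P hP h3, s2, t2, s1, t0, ← B1]
      exact b1
    · rfl
  · rw [if_pos b1, if_neg a1]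
    split_ifs with h3
    · symm
      apply hat_neg
      rw [swapEnt_braid, swap_P hP h3, t0, t1, s0, s2, ← A1]
      exact a1
    · rfl
  · rw [if_neg a1, if_neg b1]

theorem rel_rho (hG : Good n D) (hP : ∀ f, P f ↔ LE' D N f)
    (hQ : QAdmissible k (AB n) (dB n) Q) (S : Set (Fin N → Fin n))
    (hS : ∀ f, P f → resSeq n hn f ∈ S) (a b : FA k n N) (hr : Rel k Q S a b) :
    rho0 k n hn P a = rho0 k n hn P b := by
  cases hr with
  | e_orth ν ν' hne =>
    simp only [map_mul, map_zero, rho0_e]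
    refine LinearMap.ext fun v => hat_ext k fun f hf => ?_
    simp only [Module.End.mul_apply, hat_e, LinearMap.zero_apply, hat_zero]
    split_ifs with h1 h2
    · exact absurd (h1.symm.trans h2) hne
    · rfl
    · rfl
  | e_idem ν =>
    simp only [map_mul, rho0_e]
    refine LinearMap.ext fun v => hat_ext k fun f hf => ?_
    simp only [Module.End.mul_apply, hat_e]
    split_ifs <;> rfl
  | e_sum =>
    simp only [map_sum, rho0_e, map_one]
    refine LinearMap.ext fun v => funext fun T => ?_
    simp only [LinearMap.sum_apply, Finset.sum_apply, Module.End.one_apply]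
    rw [Finset.sum_eq_single (resSeq n hn T.1)]
    · simp [eOpTab]
    · intro ν _ hne
      simp [eOpTab, hne.symm]
    · simp
  | e_out ν hν =>
    simp only [rho0_e, map_zero]
    refine LinearMap.ext fun v => hat_ext k fun f hf => ?_
    rw [hat_e, LinearMap.zero_apply, hat_zero, if_neg]
    rintro rfl
    exact hν (hS f hf)
  | xx p q => simp [rho0_x]
  | xe p ν => simp [rho0_x]
  | te j h ν =>
    simp only [map_mul, rho0_e, rho0_t]
    refine LinearMap.ext fun v => hat_ext k fun f hf => ?_
    simp only [Module.End.mul_apply, hat_e, hat_t, hf, if_true, resSeq_swapEnt]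
    have : swapSeq j h (resSeq n hn f) = ν ↔ resSeq n hn f = swapSeq j h ν := by
      constructor
      · rintro rfl; funext p; simp [swapSeq, posSwap]
      · intro e; rw [e]; funext p; simp [swapSeq, posSwap]
    simp only [this]
  | tt a ha b hb hab =>
    simp only [map_mul, rho0_t]
    refine LinearMap.ext fun v => hat_ext k fun f hf => ?_
    simp only [Module.End.mul_apply, hat_t, hf, if_true]
    rw [swapEnt_comm b hb a ha hab.symm]
    have fix : ∀ (a : ℕ) (ha : a + 1 < N) (b : ℕ) (hb : b + 1 < N)
        (hab : a + 1 < b ∨ b + 1 < a), P (swapEnt a ha f) →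
        (P (swapEnt b hb (swapEnt a ha f)) ↔ P (swapEnt b hb f)) := by
      intro a ha b hb hab h
      rw [swap_P hP h, swap_P hP hf, swapEnt_rev, swapEnt_rev]
      simp only [posSwap]
      rw [Equiv.swap_apply_of_ne_of_ne, Equiv.swap_apply_of_ne_of_ne] <;>
        simp only [ne_eq, Fin.mk.injEq] <;> omega
    by_cases a1 : P (swapEnt a ha f) <;> by_cases b1 : P (swapEnt b hb f)
    · rw [if_pos a1, if_pos b1]
    · rw [if_pos a1, if_neg b1]
      apply hat_neg
      rw [← swapEnt_comm b hb a ha hab.symm, fix a ha b hb hab a1]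
      exact b1
    · rw [if_neg a1, if_pos b1]
      symm
      apply hat_neg
      rw [fix b hb a ha hab.symm b1]
      exact a1
    · rw [if_neg a1, if_neg b1]
  | tsq j h ν =>
    simp only [map_mul, rho0_t, rho0_e, eval2_map, rho0_x, eval2_zero]
    refine LinearMap.ext fun v => hat_ext k fun f hf => ?_
    simp only [Module.End.mul_apply, hat_t, hf, if_true, hat_e, Module.algebraMap_end_apply,
      hat_smul, swapEnt_swapEnt]
    by_cases hν : resSeq n hn f = ν
    · rw [if_pos hν]
      subst hν
      rcases res_nbr hn hG hP hf j h with ⟨h1, h2⟩ | ⟨h1, h2⟩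
      · rw [if_pos h1, Q_far k hQ _ _ h2]; simp
      · rw [if_neg h1, Q_adj k hQ _ _ h2]; simp
    · simp [hν]
  | tx_left j h ν hv =>
    simp only [map_mul, map_sub, rho0_t, rho0_e, rho0_x, mul_zero, zero_mul, zero_sub]
    symm
    rw [neg_eq_zero]
    refine LinearMap.ext fun v => hat_ext k fun f hf => ?_
    rw [hat_e, LinearMap.zero_apply, hat_zero, if_neg]
    rintro rfl
    rw [Fin.ext_iff] at hv
    rcases res_nbr hn hG hP hf j h with ⟨h1, h2⟩ | ⟨h1, h2⟩ <;> omega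
  | tx_right j h ν hv =>
    simp only [map_mul, map_add, rho0_t, rho0_e, rho0_x, mul_zero, zero_mul, zero_add]
    symm
    refine LinearMap.ext fun v => hat_ext k fun f hf => ?_
    rw [hat_e, LinearMap.zero_apply, hat_zero, if_neg]
    rintro rfl
    rw [Fin.ext_iff] at hv
    rcases res_nbr hn hG hP hf j h with ⟨h1, h2⟩ | ⟨h1, h2⟩ <;> omega
  | tx_comm j h ν p hcase => simp [rho0_x]
  | braid_ne j h1 h2 ν hv =>
    simp only [map_mul, rho0_t, rho0_e]
    rw [braid_op k hP]
  | braid_eq j h1 h2 ν hv =>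
    simp only [map_mul, map_add, rho0_t, rho0_e, eval3_map, rho0_x, eval3_zero]
    rw [braid_op k hP, left_eq_add]
    refine LinearMap.ext fun v => hat_ext k fun f hf => ?_
    simp only [Module.End.mul_apply, hat_e, Module.algebraMap_end_apply, hat_smul,
      LinearMap.zero_apply, hat_zero]
    by_cases hν : resSeq n hn f = ν
    · rw [if_pos hν]
      subst hν
      rcases res_nbr hn hG hP hf j h1 with ⟨k1, k2⟩ | ⟨k1, k2⟩
      · rw [Q_far k hQ _ _ k2, Qbar_one]; simp
      · rcases res_nbr hn hG hP hf (j + 1) h2 with ⟨k3, k4⟩ | ⟨k3, k4⟩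
        · have hv' : (resSeq n hn f ⟨j, Nat.lt_of_succ_lt h1⟩ : ℕ) =
              resSeq n hn f ⟨j + 1 + 1, h2⟩ := congrArg Fin.val hv
          omega
        · rw [swap_P hP hf, not_not] at k1 k3
          have hL := (hP f).mp hf
          have hv' := congrArg Fin.val hv
          simp only [resSeq, resFin_val hG (hL.mem _)] at hv'
          have := hL.pattern hG (by simp [Fin.val_rev]; omega) (by simp [Fin.val_rev]; omega)
            k3 k1 hv'.symm
          rw [Q_short k hQ]
          · simp
          · rw [hv]; simp only [resSeq, resFin_val hG (hL.mem _)]; exact this.1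
          · simp only [resSeq, resFin_val hG (hL.mem _)]; exact this.2
    · simp [hν]

end ops

end QHA

namespace QHA

/-- Every tableau has its residue sequence in `I^β`. -/
lemma resSeq_mem (n : ℕ) (hn : 0 < n) (l : List ℕ) (f : Fin l.sum → ℕ × ℕ)
    (hf : LE' (diagram l) l.sum f) :
    resSeq n hn f ∈ Iβ (AB n) (Pi.single ⟨0, hn⟩ 1) (wtP n hn l) l.sum := by
  have himg : Finset.univ.map ⟨f, hf.1⟩ = diagFinset l := by
    ext b
    have h2 : b ∈ Set.range f ↔ b ∈ diagram l := by rw [hf.2.1]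
    rw [mem_diagFinset, ← h2]
    simp
  have h1 : ∑ p : Fin l.sum, αcol (AB n) (resSeq n hn f p) =
      ∑ b ∈ diagFinset l, αcol (AB n) (resFin n hn b) := by
    rw [← himg, Finset.sum_map]
    exact Equiv.sum_comp Fin.revPerm (fun a => αcol (AB n) (resFin n hn (f a)))
  change ∑ p : Fin l.sum, αcol (AB n) (resSeq n hn f p) = _
  rw [h1]
  funext i
  simp [wtP]

lemma finite_tab {l : List ℕ} {N : ℕ} {P : (Fin N → ℕ × ℕ) → Prop}
    (hP : ∀ f, P f ↔ LE' (diagram l) N f) : Finite {f : Fin N → ℕ × ℕ // P f} := by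
  refine Finite.of_injective
    (fun T => fun a => (⟨T.1 a, (mem_diagFinset l _).mpr (((hP _).mp T.2).mem a)⟩ :
      {b // b ∈ diagFinset l})) ?_
  intro T T' e
  apply Subtype.ext
  funext a
  exact congrArg Subtype.val (congrFun e a)

section simple
variable (k : Type) [Field k] {n N : ℕ} (hn : 0 < n) {P : (Fin N → ℕ × ℕ) → Prop}
  {D : Set (ℕ × ℕ)}

lemma e_single (hG : Good n D) (hP : ∀ f, P f ↔ LE' D N f) (T : {f : Fin N → ℕ × ℕ // P f})
    (v : TabV k P) :
    eOpTab k n hn P (resSeq n hn T.1) v = v T • (Pi.single T 1 : TabV k P) := by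
  funext T'
  simp only [eOpTab, LinearMap.pi_apply, Pi.smul_apply, smul_eq_mul]
  by_cases h : T' = T
  · subst h; simp
  · rw [if_neg, Pi.single_eq_of_ne h]
    · simp
    · intro e
      apply h
      apply Subtype.ext
      have hL := (hP _).mp T.2
      have hL' := (hP _).mp T'.2
      refine hL'.res_inj hG hL fun a => ?_
      have := congrArg Fin.val (congrFun e (Fin.rev a))
      simpa only [resSeq, resFin_val hG (hL.mem _), resFin_val hG (hL'.mem _), Fin.rev_rev]
        using this

lemma t_single (T : {f : Fin N → ℕ × ℕ // P f}) (j : ℕ) (h : j + 1 < N)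
    (hs : P (swapEnt j h T.1)) :
    tOpTab k P j h (Pi.single T 1) = Pi.single ⟨swapEnt j h T.1, hs⟩ 1 := by
  funext T'
  simp only [tOpTab, LinearMap.pi_apply]
  by_cases e : T' = ⟨swapEnt j h T.1, hs⟩
  · have e2 : swapEnt j h T'.1 = T.1 := by rw [e]; exact swapEnt_swapEnt j h _
    have e3 : P (swapEnt j h T'.1) := by rw [e2]; exact T.2
    have e4 : (⟨swapEnt j h T'.1, e3⟩ : {f : Fin N → ℕ × ℕ // P f}) = T := Subtype.ext e2
    rw [dif_pos e3, LinearMap.proj_apply, e4, e]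
    simp
  · rw [Pi.single_eq_of_ne e]
    split_ifs with e3
    · rw [LinearMap.proj_apply, Pi.single_eq_of_ne]
      rintro rfl
      apply e
      apply Subtype.ext
      exact (swapEnt_swapEnt j h _).symm
    · rfl

lemma simple_aux_s11 (hG : Good n D) (hP : ∀ f, P f ↔ LE' D N f)
    [Finite {f : Fin N → ℕ × ℕ // P f}] (U : Submodule k (TabV k P))
    (hE : ∀ μ v, v ∈ U → eOpTab k n hn P μ v ∈ U)
    (hT : ∀ j h v, v ∈ U → tOpTab k P j h v ∈ U) : U = ⊥ ∨ U = ⊤ := by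
  rcases eq_or_ne U ⊥ with hb | hb
  · exact Or.inl hb
  right
  obtain ⟨v, hv, hv0⟩ := U.exists_mem_ne_zero_of_ne_bot hb
  obtain ⟨T, hT0⟩ := Function.ne_iff.mp hv0
  have hTU : (Pi.single T 1 : TabV k P) ∈ U := by
    have := hE (resSeq n hn T.1) v hv
    rw [e_single k hn hG hP] at this
    exact (U.smul_mem_iff hT0).mp this
  have hall : ∀ T' : {f : Fin N → ℕ × ℕ // P f}, (Pi.single T' 1 : TabV k P) ∈ U := by
    intro T'
    have := LE'.connected ((hP _).mp T.2) ((hP _).mp T'.2)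
      (fun q => ∃ h : P q, (Pi.single ⟨q, h⟩ 1 : TabV k P) ∈ U) ⟨T.2, hTU⟩
      (by
        rintro q hq ⟨hq', hU⟩ j h hs
        refine ⟨(hP _).mpr hs, ?_⟩
        rw [← t_single k ⟨q, hq'⟩ j h ((hP _).mpr hs)]
        exact hT j h _ hU)
    exact this.2
  have : Fintype {f : Fin N → ℕ × ℕ // P f} := Fintype.ofFinite _
  rw [eq_top_iff]
  rintro w -
  rw [pi_eq_sum_univ' w]
  refine U.sum_mem fun T' _ => U.smul_mem _ ?_
  have h2 := hall T'
  convert h2 using 1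

end simple

theorem sp_is_simple_homogeneous_module_B
    (k : Type) [Field k] (n : ℕ) (hn : 2 ≤ n)
    (Q : Fin n → Fin n → MvPolynomial (Fin 2) k)
    (hQ : QAdmissible k (AB n) (dB n) Q)
    (l : List ℕ) (hdec : l.Chain' (· > ·)) (hpos : ∀ x ∈ l, 0 < x)
    (hle : ∀ x ∈ l, x ≤ n) :
    ∃ ρ : RingQuot (Rel k Q
          (Iβ (AB n) (Pi.single ⟨0, by omega⟩ 1) (wtP n (by omega) l) l.sum)) →ₐ[k]
        Module.End k (TabV k (IsSYT l l.sum)),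
      -- the prescribed operators define an action of R(β)
      (∀ μ : Fin l.sum → Fin n,
        ρ (RingQuot.mkAlgHom k _ (Eg k μ)) = eOpTab k n (by omega) (IsSYT l l.sum) μ) ∧
      (∀ p : Fin l.sum, ρ (RingQuot.mkAlgHom k _ (Xg k p)) = 0) ∧
      (∀ (j : ℕ) (h : j + 1 < l.sum),
        ρ (RingQuot.mkAlgHom k _ (Tg k j h)) = tOpTab k (IsSYT l l.sum) j h) ∧
      -- the generators of the cyclotomic ideal act by zero, hence Sp(b) is a
      -- module over R^{Λ₁}(ξ)
      (∀ ν : Fin l.sum → Fin n,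
        ν ∈ Iβ (AB n) (Pi.single ⟨0, by omega⟩ 1) (wtP n (by omega) l) l.sum →
        ∀ p : Fin l.sum, (p : ℕ) + 1 = l.sum →
        ρ (RingQuot.mkAlgHom k _
          (Xg k p ^ ((Pi.single (⟨0, by omega⟩ : Fin n) (1 : ℤ) : Fin n → ℤ) (ν p)).toNat * Eg k ν)) = 0) ∧
      -- Sp(b) is nonzero, every x_k acts by zero (homogeneity), and there is no
      -- nontrivial invariant subspace: Sp(b) is a simple R^{Λ₁}(ξ)-module
      (∃ v : TabV k (IsSYT l l.sum), v ≠ 0) ∧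
      (∀ U : Submodule k (TabV k (IsSYT l l.sum)),
        (∀ a v, v ∈ U → ρ a v ∈ U) → U = ⊥ ∨ U = ⊤) := by
  have hn0 : 0 < n := by omega
  have hG := diagram_good n l hdec hle
  have hP : ∀ f, IsSYT l l.sum f ↔ LE' (diagram l) l.sum f := isSYT_iff hG l.sum
  have hrel := rel_rho k hn0 hG hP hQ
    (Iβ (AB n) (Pi.single ⟨0, hn0⟩ 1) (wtP n hn0 l) l.sum)
    (fun f hf => resSeq_mem n hn0 l f ((hP f).mp hf))
  have := finite_tab hP
  have hlift : ∀ a, RingQuot.liftAlgHom k ⟨rho0 k n hn0 (IsSYT l l.sum), hrel⟩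
      (RingQuot.mkAlgHom k _ a) = rho0 k n hn0 (IsSYT l l.sum) a := fun a =>
    RingQuot.liftAlgHom_mkAlgHom_apply k _ _ _
  refine ⟨RingQuot.liftAlgHom k ⟨rho0 k n hn0 (IsSYT l l.sum), hrel⟩, ?_, ?_, ?_, ?_, ?_, ?_⟩
  · intro μ
    rw [hlift, rho0_e]
  · intro p
    rw [hlift, rho0_x]
  · intro j h
    rw [hlift, rho0_t]
  · intro ν _ p hp
    rw [hlift, map_mul, map_pow, rho0_x, rho0_e]
    by_cases h0 : ν p = ⟨0, hn0⟩
    · rw [h0]; simp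
    · refine LinearMap.ext fun v => hat_ext k fun f hf => ?_
      have hz : eOpTab k n hn0 (IsSYT l l.sum) ν = 0 := by
        refine LinearMap.ext fun v => hat_ext k fun f hf => ?_
        rw [hat_e, LinearMap.zero_apply, hat_zero, if_neg]
        rintro rfl
        apply h0
        apply Fin.ext
        have hL := (hP f).mp hf
        simp only [resSeq, resFin_val hG (hL.mem _)]
        exact hL.first hG (by simp [Fin.val_rev]; omega)
      rw [hz, mul_zero]
  · obtain ⟨f, hf⟩ := exists_LE' l
    exact ⟨Pi.single ⟨f, (hP f).mpr hf⟩ 1, by simp⟩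
  · intro U hU
    refine simple_aux_s11 k hn0 hG hP U (fun μ v hv => ?_) (fun j h v hv => ?_)
    · have := hU (RingQuot.mkAlgHom k _ (Eg k μ)) v hv
      rwa [hlift, rho0_e] at this
    · have := hU (RingQuot.mkAlgHom k _ (Tg k j h)) v hv
      rwa [hlift, rho0_t] at this

end QHA
end
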